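/- Let D be a bounded domain in ℂ and w ∈ ∂D. Then the following are equivalent: (i) limsup_{D ∋ z → w} K_D(z) < ∞; (ii) there is an open neighborhood U of w such that the set U \ D is polar. -/

import Mathlib

open MeasureTheory Filter Topology Metric Set
open scoped ENNReal NNReal

/-- Truncated circle average of an `EReal`-valued function: the average over the circle of
center `c` and radius `R` of the function truncated below at `-n`. -/
noncomputable def circleAvgTrunc (u : ℂ → EReal) (c : ℂ) (R : ℝ) (n : ℕ) : ℝ :=
  (2 * Real.pi)⁻¹ * ∫ θ in (0:ℝ)..(2 * Real.pi),
    (max (u (c + R * Complex.exp (θ * Complex.I))) (-(n : ℝ) : EReal)).toReal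

/-- `u` is subharmonic on `Ω ⊆ ℂ`: values in `[-∞, ∞)`, upper semicontinuous on `Ω`, and for
every closed disc contained in `Ω` the value at the center is at most the mean over the
boundary circle (in the extended sense, via decreasing truncations). -/
def SubharmonicOn (u : ℂ → EReal) (Ω : Set ℂ) : Prop :=
  UpperSemicontinuousOn u Ω ∧ (∀ z ∈ Ω, u z < ⊤) ∧
    ∀ c ∈ Ω, ∀ R : ℝ, 0 < R → Metric.closedBall c R ⊆ Ω →
      u c ≤ ⨅ n : ℕ, (circleAvgTrunc u c R n : EReal)

/-- `u` is plurisubharmonic on `Ω`: values in `[-∞, ∞)`, upper semicontinuous on `Ω`, and its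
restriction to every complex line is subharmonic. -/
def PlurisubharmonicOn {E : Type*} [NormedAddCommGroup E] [NormedSpace ℂ E]
    (u : E → EReal) (Ω : Set E) : Prop :=
  UpperSemicontinuousOn u Ω ∧ (∀ z ∈ Ω, u z < ⊤) ∧
    ∀ a b : E, SubharmonicOn (fun lam : ℂ => u (a + lam • b)) {lam : ℂ | a + lam • b ∈ Ω}

/-- A set `P ⊆ ℂ` is polar. -/
def PolarSet (P : Set ℂ) : Prop :=
  ∀ z ∈ P, ∃ U : Set ℂ, IsOpen U ∧ IsConnected U ∧ z ∈ U ∧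
    ∃ u : ℂ → EReal, SubharmonicOn u U ∧ (∃ x ∈ U, u x ≠ ⊥) ∧ ∀ x ∈ P ∩ U, u x = ⊥

/-- A set `P ⊆ ℂⁿ` is pluripolar. -/
def PluripolarSet {E : Type*} [NormedAddCommGroup E] [NormedSpace ℂ E] (P : Set E) : Prop :=
  ∀ z ∈ P, ∃ U : Set E, IsOpen U ∧ IsConnected U ∧ z ∈ U ∧
    ∃ u : E → EReal, PlurisubharmonicOn u U ∧ (∃ x ∈ U, u x ≠ ⊥) ∧ ∀ x ∈ P ∩ U, u x = ⊥

/-- A domain `D` is pseudoconvex if `z ↦ -log dist(z, ∂D)` is plurisubharmonic on `D`. -/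
def IsPseudoconvex {E : Type*} [NormedAddCommGroup E] [NormedSpace ℂ E] (D : Set E) : Prop :=
  PlurisubharmonicOn (fun z => ((- Real.log (Metric.infDist z Dᶜ) : ℝ) : EReal)) D

/-- The square-integrable holomorphic functions on an open set `Ω`. -/
def L2h {E : Type*} [NormedAddCommGroup E] [NormedSpace ℂ E] [MeasureSpace E]
    (Ω : Set E) : Set (E → ℂ) :=
  {f | DifferentiableOn ℂ f Ω ∧ (∫⁻ z in Ω, (‖f z‖₊ : ℝ≥0∞) ^ 2) < ⊤}

/-- The Bergman kernel of `Ω` on the diagonal,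
`K_Ω(z) = sup { |f(z)|²/‖f‖²_{L²(Ω)} : f ∈ L²ₕ(Ω), f ≢ 0 }`. -/
noncomputable def bergmanKernel {E : Type*} [NormedAddCommGroup E] [NormedSpace ℂ E]
    [MeasureSpace E] (Ω : Set E) (z : E) : ℝ≥0∞ :=
  ⨆ (f : E → ℂ) (_ : f ∈ L2h Ω) (_ : ∃ w ∈ Ω, f w ≠ 0),
    (‖f z‖₊ : ℝ≥0∞) ^ 2 / ∫⁻ w in Ω, (‖f w‖₊ : ℝ≥0∞) ^ 2

/-- `D` is an `L²ₕ`-domain of holomorphy: there are no domains `D₀, D₁` with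
`∅ ≠ D₀ ⊆ D₁ ∩ D`, `D₁ ⊄ D`, such that every `f ∈ L²ₕ(D)` extends holomorphically to `D₁`
(agreeing with `f` on `D₀`). -/
def IsL2hDomainOfHolomorphy {E : Type*} [NormedAddCommGroup E] [NormedSpace ℂ E]
    [MeasureSpace E] (D : Set E) : Prop :=
  ¬ ∃ D0 D1 : Set E, IsOpen D0 ∧ IsConnected D0 ∧ IsOpen D1 ∧ IsConnected D1 ∧
      D0 ⊆ D1 ∩ D ∧ ¬ (D1 ⊆ D) ∧
      ∀ f ∈ L2h D, ∃ F : E → ℂ, DifferentiableOn ℂ F D1 ∧ Set.EqOn F f D0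

/-- `w` is a regular boundary point of the domain `D ⊆ ℂ`. -/
def RegularBoundaryPt (D : Set ℂ) (w : ℂ) : Prop :=
  ∃ U : Set ℂ, IsOpen U ∧ w ∈ U ∧ ∃ u : ℂ → EReal, SubharmonicOn u (U ∩ D) ∧
    (∀ z ∈ U ∩ D, u z < 0) ∧ Tendsto u (𝓝[U ∩ D] w) (𝓝 (0 : EReal))

/-- The (pluricomplex) Green function of a domain `D ⊆ ℂ` with logarithmic pole at `p`. -/
noncomputable def greenFn (D : Set ℂ) (p z : ℂ) : EReal :=
  sSup {v : EReal | ∃ u : ℂ → EReal, SubharmonicOn u D ∧ (∀ x ∈ D, u x < 0) ∧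
    (∃ C : ℝ, ∀ᶠ x in 𝓝 p, u x ≤ ((Real.log ‖x - p‖ + C : ℝ) : EReal)) ∧ v = u z}

/-- A polydisc in `ℂⁿ` with centre `c` and multiradius `r`. -/
def polydisc {n : ℕ} (c : Fin n → ℂ) (r : Fin n → ℝ) : Set (Fin n → ℂ) :=
  {z | ∀ i, ‖z i - c i‖ < r i}


lemma A0_pt (f : ℂ → ℂ) (a z : ℂ) (ρ : ℝ) (hρ : 0 < ρ) (hz : z ∉ ball a ρ) :
    (‖dslope f a z‖₊ : ℝ≥0∞) ^ 2 ≤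
      ENNReal.ofReal (ρ⁻¹ ^ 2) * (2 * (‖f z‖₊ : ℝ≥0∞) ^ 2 + 2 * (‖f a‖₊ : ℝ≥0∞) ^ 2) := by
  have hza : z ≠ a := by
    rintro rfl; exact hz (mem_ball_self hρ)
  have hd : ρ ≤ ‖z - a‖ := by
    rw [mem_ball, dist_eq_norm] at hz; linarith
  have key : ‖dslope f a z‖ ^ 2 ≤ ρ⁻¹ ^ 2 * (2 * ‖f z‖ ^ 2 + 2 * ‖f a‖ ^ 2) := by
    rw [dslope_of_ne _ hza, slope_def_field, norm_div, div_pow, div_eq_mul_inv, mul_comm]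
    have h1 : ‖f z - f a‖ ^ 2 ≤ 2 * ‖f z‖ ^ 2 + 2 * ‖f a‖ ^ 2 := by
      have := norm_sub_le (f z) (f a)
      nlinarith [norm_nonneg (f z - f a), sq_nonneg (‖f z‖ - ‖f a‖), norm_nonneg (f z), norm_nonneg (f a)]
    have h2 : (‖z - a‖ ^ 2)⁻¹ ≤ ρ⁻¹ ^ 2 := by
      rw [inv_pow]; gcongr
    gcongr
  have e : ∀ x : ℂ, (‖x‖₊ : ℝ≥0∞) ^ 2 = ENNReal.ofReal (‖x‖ ^ 2) := by
    intro x
    rw [ENNReal.ofReal_pow (norm_nonneg _), ofReal_norm]; rfl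
  rw [e, e, e]
  have h2 : (2 : ℝ≥0∞) = ENNReal.ofReal 2 := by simp
  rw [h2, ← ENNReal.ofReal_mul (by norm_num), ← ENNReal.ofReal_mul (by norm_num),
    ← ENNReal.ofReal_add (by positivity) (by positivity), ← ENNReal.ofReal_mul (by positivity)]
  exact ENNReal.ofReal_le_ofReal key

lemma A0 (D : Set ℂ) (hD : MeasurableSet D) (f : ℂ → ℂ) (a : ℂ) (ρ : ℝ) (hρ : 0 < ρ) (S : ℝ≥0∞)
    (hS : ∀ z ∈ D ∩ ball a ρ, (‖dslope f a z‖₊ : ℝ≥0∞) ^ 2 ≤ S)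
    (hf : AEMeasurable (fun z => (‖f z‖₊ : ℝ≥0∞) ^ 2) (volume.restrict D)) :
    ∫⁻ z in D, (‖dslope f a z‖₊ : ℝ≥0∞) ^ 2 ≤ S * volume (ball a ρ) +
      ENNReal.ofReal (ρ⁻¹ ^ 2) * (2 * (∫⁻ z in D, (‖f z‖₊ : ℝ≥0∞) ^ 2) +
        2 * (‖f a‖₊ : ℝ≥0∞) ^ 2 * volume D) := by
  calc ∫⁻ z in D, (‖dslope f a z‖₊ : ℝ≥0∞) ^ 2 
      ≤ ∫⁻ z in D, ((ball a ρ).indicator (fun _ => S) z + ENNReal.ofReal (ρ⁻¹ ^ 2) * (2 * (‖f z‖₊ : ℝ≥0∞) ^ 2 + 2 * (‖f a‖₊ : ℝ≥0∞) ^ 2)) := by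
        apply setLIntegral_mono' hD
        intro z hz
        by_cases h : z ∈ ball a ρ
        · rw [indicator_of_mem h]
          exact (hS z ⟨hz, h⟩).trans le_self_add
        · exact (A0_pt f a z ρ hρ h).trans le_add_self
    _ = (∫⁻ z in D, (ball a ρ).indicator (fun _ => S) z) + ∫⁻ z in D, ENNReal.ofReal (ρ⁻¹ ^ 2) * (2 * (‖f z‖₊ : ℝ≥0∞) ^ 2 + 2 * (‖f a‖₊ : ℝ≥0∞) ^ 2) :=
        lintegral_add_left (measurable_const.indicator measurableSet_ball) _
    _ ≤ _ := by
        gcongr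
        · calc _ ≤ ∫⁻ z, (ball a ρ).indicator (fun _ => S) z := setLIntegral_le_lintegral _ _
            _ = _ := by rw [lintegral_indicator_const measurableSet_ball]
        · rw [lintegral_const_mul'' _ (by fun_prop), lintegral_add_right _ measurable_const, lintegral_const_mul'' _ hf]
          simp

lemma L2h_aemeas {D : Set ℂ} (hD : IsOpen D) {f : ℂ → ℂ} (hf : f ∈ L2h D) :
    AEMeasurable (fun z => (‖f z‖₊ : ℝ≥0∞) ^ 2) (volume.restrict D) := by
  have := hf.1.continuousOn.aemeasurable (μ := volume) hD.measurableSet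
  fun_prop

lemma A1 {D : Set ℂ} (hD : IsOpen D) (hb : Bornology.IsBounded D) {f : ℂ → ℂ} (hf : f ∈ L2h D)
    {a : ℂ} (ha : a ∈ D) : dslope f a ∈ L2h D := by
  have hdiff : DifferentiableOn ℂ (dslope f a) D :=
    (Complex.differentiableOn_dslope (hD.mem_nhds ha)).2 hf.1
  refine ⟨hdiff, ?_⟩
  obtain ⟨ρ, hρ, hsub⟩ := Metric.nhds_basis_closedBall.mem_iff.1 (hD.mem_nhds ha)
  obtain ⟨C, hC⟩ := (isCompact_closedBall a ρ).exists_bound_of_continuousOn (hdiff.continuousOn.mono hsub)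
  refine lt_of_le_of_lt (A0 D hD.measurableSet f a ρ hρ ((C.toNNReal : ℝ≥0∞) ^ 2) ?_ (L2h_aemeas hD hf)) ?_
  · intro z hz
    have := hC z (ball_subset_closedBall hz.2)
    gcongr
    rw [← NNReal.coe_le_coe]
    exact this.trans (Real.le_coe_toNNReal C)
  · have h1 := hf.2.ne
    have h2 : volume D ≠ ⊤ := hb.measure_lt_top.ne
    have h3 : volume (ball a ρ) ≠ ⊤ := measure_ball_lt_top.ne
    rw [lt_top_iff_ne_top]
    finiteness

lemma A2 {D : Set ℂ} (hD : IsOpen D) (hb : Bornology.IsBounded D) (w : ℂ) (r : ℝ) (hr : 0 < r)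
    (M : ℝ≥0∞) (hM : M ≠ ⊤)
    (hK : ∀ f ∈ L2h D, ∀ z ∈ D ∩ ball w r, (‖f z‖₊ : ℝ≥0∞) ^ 2 ≤ M * ∫⁻ z in D, (‖f z‖₊ : ℝ≥0∞) ^ 2) :
    ∃ C : ℝ≥0∞, C ≠ ⊤ ∧ ∀ f ∈ L2h D, ∀ a ∈ D ∩ ball w (r/2),
      ∫⁻ z in D, (‖dslope f a z‖₊ : ℝ≥0∞) ^ 2 ≤ C * ∫⁻ z in D, (‖f z‖₊ : ℝ≥0∞) ^ 2 := by
  obtain ⟨ρ, hρ, hρr, hρM⟩ : ∃ ρ : ℝ, 0 < ρ ∧ ρ ≤ r/2 ∧ M * (ENNReal.ofReal ρ ^ 2 * (NNReal.pi : ℝ≥0∞)) ≤ 1/2 := by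
    have ht : Tendsto (fun ρ : ℝ => M * (ENNReal.ofReal ρ ^ 2 * (NNReal.pi : ℝ≥0∞))) (𝓝[>] 0) (𝓝 0) := by
      have h1 : Tendsto (fun ρ : ℝ => ENNReal.ofReal (ρ ^ 2 * Real.pi)) (𝓝[>] 0) (𝓝 0) := by
        have : Continuous (fun ρ : ℝ => ENNReal.ofReal (ρ ^ 2 * Real.pi)) :=
          ENNReal.continuous_ofReal.comp (by fun_prop)
        have := this.tendsto 0
        simp only [ne_eq, OfNat.ofNat_ne_zero, not_false_eq_true, zero_pow, zero_mul, ENNReal.ofReal_zero] at this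
        exact this.mono_left nhdsWithin_le_nhds
      have h2 := ENNReal.Tendsto.const_mul h1 (Or.inr hM)
      rw [mul_zero] at h2
      refine h2.congr' ?_
      filter_upwards [self_mem_nhdsWithin] with ρ hρ
      rw [ENNReal.ofReal_mul (by positivity), ENNReal.ofReal_pow (le_of_lt hρ),
        ← NNReal.coe_real_pi, ENNReal.ofReal_coe_nnreal]
    have e1 := ht.eventually_lt_const (u := 1/2) (by simp)
    have e2 : ∀ᶠ ρ : ℝ in 𝓝[>] 0, ρ ≤ r/2 :=
      (eventually_le_nhds (show (0:ℝ) < r/2 by linarith)).filter_mono nhdsWithin_le_nhds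
    obtain ⟨ρ, h1, h2, h3⟩ := (e1.and (e2.and self_mem_nhdsWithin)).exists
    exact ⟨ρ, h3, h2, h1.le⟩
  have h2 : volume D ≠ ⊤ := hb.measure_lt_top.ne
  refine ⟨2 * (ENNReal.ofReal (ρ⁻¹ ^ 2) * (2 + 2 * M * volume D)), by finiteness, ?_⟩
  intro f hf a ha
  have hg := A1 hD hb hf ha.1
  set G := ∫⁻ z in D, (‖dslope f a z‖₊ : ℝ≥0∞) ^ 2 with hG
  set N := ∫⁻ z in D, (‖f z‖₊ : ℝ≥0∞) ^ 2 with hN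
  have hfa := hK f hf a ⟨ha.1, ball_subset_ball (by linarith) ha.2⟩
  have h := A0 D hD.measurableSet f a ρ hρ (M * G) (by
    intro z hz
    refine hK _ hg z ⟨hz.1, ?_⟩
    have h1 := hz.2
    have h2 := ha.2
    rw [mem_ball] at *
    linarith [dist_triangle z a w]) (L2h_aemeas hD hf)
  have h' : G ≤ G / 2 + ENNReal.ofReal (ρ⁻¹ ^ 2) * (2 + 2 * M * volume D) * N := by
    refine h.trans (add_le_add ?_ ?_)
    · rw [Complex.volume_ball, mul_right_comm, mul_comm, div_eq_mul_inv]
      gcongr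
      simpa using hρM
    · rw [mul_assoc (ENNReal.ofReal _)]
      gcongr
      calc 2 * N + 2 * (‖f a‖₊ : ℝ≥0∞) ^ 2 * volume D ≤ 2 * N + 2 * (M * N) * volume D := by gcongr
        _ = _ := by ring
  have hGt : G ≠ ⊤ := hg.2.ne
  set X := ENNReal.ofReal (ρ⁻¹ ^ 2) * (2 + 2 * M * volume D) * N with hX
  have h3 : G / 2 + G / 2 ≤ G / 2 + X := by rwa [ENNReal.add_halves]
  have h4 : G / 2 ≤ X := (ENNReal.add_le_add_iff_left (ENNReal.div_ne_top hGt (by norm_num))).1 h3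
  rw [mul_assoc, ← hX]
  rw [ENNReal.div_le_iff_le_mul (by simp) (by simp)] at h4
  rwa [mul_comm]


lemma A3 {D : Set ℂ} (hD : IsOpen D) (hb : Bornology.IsBounded D) (w : ℂ) (hw : w ∈ closure D) (r : ℝ) (hr : 0 < r)
    (M : ℝ≥0∞) (hM : M ≠ ⊤)
    (hK : ∀ f ∈ L2h D, ∀ z ∈ D ∩ ball w r, (‖f z‖₊ : ℝ≥0∞) ^ 2 ≤ M * ∫⁻ z in D, (‖f z‖₊ : ℝ≥0∞) ^ 2) :
    ∃ s : ℝ, 0 < s ∧ ∀ f ∈ L2h D, ∃ F : ℂ → ℂ, DifferentiableOn ℂ F (ball w s) ∧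
      ∀ z ∈ D ∩ ball w s, F z = f z := by
  obtain ⟨C0, hC0, hC⟩ := A2 hD hb w r hr M hM hK
  -- real constant
  obtain ⟨C, hC1, hCle⟩ : ∃ C : ℝ, 1 ≤ C ∧ C0 ≤ ENNReal.ofReal C ^ 2 := by
    refine ⟨max 1 C0.toReal, le_max_left _ _, ?_⟩
    rw [← ENNReal.ofReal_pow (by positivity)]
    refine ENNReal.le_ofReal_iff_toReal_le hC0 (by positivity) |>.2 ?_
    have h1 := le_max_left 1 C0.toReal
    have h2 := le_max_right 1 C0.toReal
    nlinarith
  have hCpos : 0 < C := by linarith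
  set s := min (r/2) (C⁻¹/4) with hs
  have hspos : 0 < s := by positivity
  have hs1 : s ≤ r/2 := min_le_left _ _
  have hs2 : s ≤ C⁻¹/4 := min_le_right _ _
  refine ⟨s, hspos, ?_⟩
  obtain ⟨a, haD, haw⟩ := Metric.mem_closure_iff.1 hw s hspos
  rw [dist_comm] at haw
  intro f hf
  set g : ℕ → ℂ → ℂ := fun k => (fun h => dslope h a)^[k] f with hg
  have hgs : ∀ k, g (k+1) = dslope (g k) a := fun k => Function.iterate_succ_apply' _ _ _
  have hg0 : g 0 = f := rfl
  set N := (∫⁻ z in D, (‖f z‖₊ : ℝ≥0∞) ^ 2) with hN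
  have hgL : ∀ k, g k ∈ L2h D ∧ ∫⁻ z in D, (‖g k z‖₊ : ℝ≥0∞) ^ 2 ≤ (ENNReal.ofReal C ^ 2) ^ k * N := by
    intro k
    induction k with
    | zero => exact ⟨hf, by simp [hg0, hN]⟩
    | succ k ih =>
      rw [hgs]
      refine ⟨A1 hD hb ih.1 haD, ?_⟩
      refine (hC _ ih.1 a ⟨haD, by rw [mem_ball]; linarith⟩).trans ?_
      rw [pow_succ', mul_assoc]
      gcongr
      exact ih.2
  have hNt : N ≠ ⊤ := hf.2.ne
  set B := Real.sqrt (M * N).toReal with hB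
  have hgb : ∀ k, ∀ z ∈ D ∩ ball w r, ‖g k z‖ ≤ B * C ^ k := by
    intro k z hz
    have h := (hK _ (hgL k).1 z hz).trans (mul_le_mul_right (hgL k).2 M)
    have h' := ENNReal.toReal_mono (by finiteness) h
    have e : M * ((ENNReal.ofReal C ^ 2) ^ k * N) = (ENNReal.ofReal C ^ 2) ^ k * (M * N) := by ring
    rw [e, ENNReal.toReal_mul, ENNReal.toReal_pow, ENNReal.toReal_pow, ENNReal.toReal_pow, ENNReal.toReal_ofReal hCpos.le] at h'
    simp only [ENNReal.coe_toReal, coe_nnnorm] at h'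
    apply le_of_sq_le_sq _ (by positivity)
    rw [mul_pow, hB, Real.sq_sqrt ENNReal.toReal_nonneg]
    calc _ ≤ _ := h'
      _ = _ := by ring
  have hexp : ∀ k z, f z = ∑ j ∈ Finset.range k, g j a * (z - a) ^ j + (z - a) ^ k * g k z := by
    intro k z
    induction k with
    | zero => simp [hg0]
    | succ k ih =>
      rw [ih, Finset.sum_range_succ, hgs, pow_succ, mul_assoc ((z - a) ^ k)]
      have : (z - a) * dslope (g k) a z = g k z - g k a := by
        have := sub_smul_dslope (g k) a z
        simpa using this
      rw [this]; ring
  -- coefficients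
  have hga : ∀ k, ‖g k a‖ ≤ B * C ^ k := fun k => hgb k a ⟨haD, by rw [mem_ball]; linarith⟩
  refine ⟨fun z => ∑' j, g j a * (z - a) ^ j, ?_, ?_⟩
  · refine Complex.differentiableOn_tsum_of_summable_norm (u := fun j => B * (1/2) ^ j) ?_ ?_ isOpen_ball ?_
    · exact (summable_geometric_of_lt_one (by norm_num) (by norm_num)).mul_left B
    · intro j; fun_prop
    · intro j z hz
      have hz' : ‖z - a‖ ≤ C⁻¹ / 2 := by
        rw [← dist_eq_norm]
        rw [mem_ball] at hz
        linarith [dist_triangle z w a, dist_comm w a]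
      rw [norm_mul, norm_pow]
      calc ‖g j a‖ * ‖z - a‖ ^ j ≤ (B * C ^ j) * (C⁻¹ / 2) ^ j := by gcongr; exact hga j
        _ = B * (1/2) ^ j := by rw [mul_assoc, ← mul_pow]; congr 2; field_simp
  · intro z hz
    have hz' : ‖z - a‖ ≤ C⁻¹ / 2 := by
        rw [← dist_eq_norm]
        have hz := hz.2
        rw [mem_ball] at hz
        linarith [dist_triangle z w a, dist_comm w a]
    apply HasSum.tsum_eq
    have hsm : Summable (fun j => g j a * (z - a) ^ j) := by
      refine Summable.of_norm_bounded (g := fun j => B * (1/2) ^ j) ((summable_geometric_of_lt_one (by norm_num) (by norm_num)).mul_left B) ?_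
      intro j
      rw [norm_mul, norm_pow]
      calc ‖g j a‖ * ‖z - a‖ ^ j ≤ (B * C ^ j) * (C⁻¹ / 2) ^ j := by gcongr; exact hga j
        _ = B * (1/2) ^ j := by rw [mul_assoc, ← mul_pow]; congr 2; field_simp
    rw [hsm.hasSum_iff_tendsto_nat]
    rw [← tendsto_sub_nhds_zero_iff]
    refine squeeze_zero_norm (a := fun j => B * (1/2) ^ j) ?_ ?_
    · intro k
      have : (∑ j ∈ Finset.range k, g j a * (z - a) ^ j) - f z = - ((z - a) ^ k * g k z) := by
        rw [hexp k z]; ring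
      rw [this, norm_neg, norm_mul, norm_pow]
      calc ‖z - a‖ ^ k * ‖g k z‖ ≤ (C⁻¹ / 2) ^ k * (B * C ^ k) := by
            gcongr; exact hgb k z ⟨hz.1, ball_subset_ball (by linarith) hz.2⟩
        _ = B * (1/2) ^ k := by rw [mul_left_comm, ← mul_pow]; congr 2; field_simp
    · have := (tendsto_pow_atTop_nhds_zero_of_lt_one (r := (1/2 : ℝ)) (by norm_num) (by norm_num)).const_mul B
      simpa using this

lemma A4 {D : Set ℂ} (w : ℂ) 
    (h : Filter.limsup (fun z => bergmanKernel D z) (𝓝[D] w) < (⊤ : ℝ≥0∞)) :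
    ∃ r > 0, ∃ M : ℝ≥0∞, M ≠ ⊤ ∧ ∀ f ∈ L2h D, ∀ z ∈ D ∩ ball w r,
      (‖f z‖₊ : ℝ≥0∞) ^ 2 ≤ M * ∫⁻ z in D, (‖f z‖₊ : ℝ≥0∞) ^ 2 := by
  obtain ⟨M, hM1, hM2⟩ := exists_between h
  have := Filter.eventually_lt_of_limsup_lt hM1
  rw [eventually_nhdsWithin_iff, Metric.eventually_nhds_iff_ball] at this
  obtain ⟨r, hr, H⟩ := this
  refine ⟨r, hr, M, hM2.ne, ?_⟩
  intro f hf z hz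
  by_cases h0 : f z = 0
  · simp [h0]
  have h1 := (H z hz.2 hz.1).le
  have h2 : (‖f z‖₊ : ℝ≥0∞) ^ 2 / (∫⁻ w in D, (‖f w‖₊ : ℝ≥0∞) ^ 2) ≤ M := by
    refine le_trans ?_ h1
    unfold bergmanKernel
    exact le_iSup_of_le f (le_iSup_of_le hf (le_iSup_of_le ⟨z, hz.1, h0⟩ le_rfl))
  rwa [ENNReal.div_le_iff_le_mul (Or.inr hM2.ne) (Or.inl hf.2.ne)] at h2


lemma submean_log (n : ℕ) (z : ℕ → ℂ) (δ : ℝ) (hδ : 0 < δ) (c : ℂ) (R : ℝ) (hR : 0 < R) :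
    Real.log (max (∏ i ∈ Finset.range n, ‖c - z i‖) δ) ≤
      Real.circleAverage (fun x => Real.log (max (∏ i ∈ Finset.range n, ‖x - z i‖) δ)) c R := by
  have hcont : Continuous (fun x : ℂ => Real.log (max (∏ i ∈ Finset.range n, ‖x - z i‖) δ)) := by
    refine Continuous.log (by fun_prop) ?_
    intro x
    exact (lt_of_lt_of_le hδ (le_max_right _ _)).ne'
  have hci : CircleIntegrable (fun x : ℂ => Real.log (max (∏ i ∈ Finset.range n, ‖x - z i‖) δ)) c R :=
    hcont.continuousOn.circleIntegrable hR.le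
  by_cases hP : (∏ i ∈ Finset.range n, ‖c - z i‖) ≤ δ
  · rw [max_eq_right hP]
    calc Real.log δ = Real.circleAverage (fun _ => Real.log δ) c R := by rw [Real.circleAverage_const]
      _ ≤ _ := by
        apply Real.circleAverage_mono (circleIntegrable_const _ _ _) hci
        intro x _
        exact Real.log_le_log hδ (le_max_right _ _)
  · push Not at hP
    rw [max_eq_left hP.le]
    have hne : ∀ i ∈ Finset.range n, ‖c - z i‖ ≠ 0 := by
      intro i hi h0
      rw [Finset.prod_eq_zero hi h0] at hP
      linarith
    rw [Real.log_prod hne]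
    have h1 : ∀ i ∈ Finset.range n, Real.log ‖c - z i‖ ≤ Real.circleAverage (Real.log ‖· - z i‖) c R := by
      intro i hi
      have h0 : 0 < ‖c - z i‖ := lt_of_le_of_ne (norm_nonneg _) (hne i hi).symm
      rw [circleAverage_log_norm_sub_const_eq_log_radius_add_posLog hR.ne']
      have : Real.log (R⁻¹ * ‖c - z i‖) ≤ Real.posLog (R⁻¹ * ‖c - z i‖) := le_max_right _ _
      rw [Real.log_mul (by positivity) h0.ne', Real.log_inv] at this
      linarith
    refine (Finset.sum_le_sum h1).trans ?_
    rw [← Real.circleAverage_fun_sum (fun i hi => circleIntegrable_log_norm_sub_const R)]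
    set f2 : ℂ → ℝ := fun x => if (∏ i ∈ Finset.range n, ‖x - z i‖) = 0 then Real.log δ else ∑ i ∈ Finset.range n, Real.log ‖x - z i‖ with hf2
    have hcod : (fun x => ∑ i ∈ Finset.range n, Real.log ‖x - z i‖) =ᶠ[codiscreteWithin (sphere c |R|)] f2 := by
      have hfin : (((Finset.range n).image z : Finset ℂ) : Set ℂ).Finite := Finset.finite_toSet _
      filter_upwards [compl_finite_mem_codiscreteWithin hfin] with x hx
      rw [hf2]
      simp only
      rw [if_neg]
      intro h
      rw [Finset.prod_eq_zero_iff] at h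
      obtain ⟨i, hi, h⟩ := h
      apply hx
      rw [norm_eq_zero, sub_eq_zero] at h
      rw [Finset.mem_coe, h]
      exact Finset.mem_image_of_mem z hi
    rw [Real.circleAverage_congr_codiscreteWithin hcod hR.ne']
    apply Real.circleAverage_mono _ hci
    · intro x _
      simp only [hf2]
      split_ifs with h
      · exact Real.log_le_log hδ (le_max_right _ _)
      · rw [← Real.log_prod (fun i hi h0 => h (Finset.prod_eq_zero hi h0))]
        apply Real.log_le_log _ (le_max_left _ _)
        exact lt_of_le_of_ne (Finset.prod_nonneg (fun _ _ => norm_nonneg _)) (Ne.symm h)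
    · refine CircleIntegrable.congr_codiscreteWithin hcod ?_
      exact CircleIntegrable.fun_sum _ (fun i hi => circleIntegrable_log_norm_sub_const R)

lemma trunc_eq (u : ℂ → EReal) (c : ℂ) (R : ℝ) (n : ℕ) : circleAvgTrunc u c R n =
   Real.circleAverage (fun z => (max (u z) (-(n : ℝ) : EReal)).toReal) c R := rfl

lemma subharmonic_sum (t : ℕ → ℂ → ℝ) (Ω : Set ℂ) (hc : ∀ k, Continuous (t k))
    (hneg : ∀ k, ∀ x ∈ Ω, t k x ≤ 0)
    (hsub : ∀ k, ∀ c, ∀ R, 0 < R → t k c ≤ Real.circleAverage (t k) c R) :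
    SubharmonicOn (fun x => ⨅ N : ℕ, ((∑ k ∈ Finset.range N, t k x : ℝ) : EReal)) Ω := by
  have hS : ∀ N, Continuous (fun x => ∑ k ∈ Finset.range N, t k x) := fun N =>
    continuous_finsetSum _ (fun k _ => hc k)
  have hanti : ∀ x ∈ Ω, Antitone (fun N => ((∑ k ∈ Finset.range N, t k x : ℝ) : EReal)) := by
    intro x hx
    apply antitone_nat_of_succ_le
    intro N
    rw [EReal.coe_le_coe_iff, Finset.sum_range_succ]
    linarith [hneg N x hx]
  refine ⟨?_, ?_, ?_⟩
  · apply upperSemicontinuousOn_iInf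
    intro N
    exact (continuous_coe_real_ereal.comp (hS N)).upperSemicontinuous.upperSemicontinuousOn _
  · intro x _
    refine lt_of_le_of_lt (iInf_le _ 0) ?_
    simp
  · intro c hcΩ R hR hball
    refine le_iInf fun n => ?_
    have hsph : ∀ θ, circleMap c R θ ∈ Ω := fun θ => hball (sphere_subset_closedBall (circleMap_mem_sphere c hR.le θ))
    set u : ℂ → EReal := (fun x => ⨅ N : ℕ, ((∑ k ∈ Finset.range N, t k x : ℝ) : EReal)) with hu
    have key : Tendsto (fun N => Real.circleAverage (fun x => max (∑ k ∈ Finset.range N, t k x) (-(n:ℝ))) c R) atTop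
        (𝓝 (circleAvgTrunc u c R n)) := by
      rw [trunc_eq]
      unfold Real.circleAverage
      apply Tendsto.const_smul
      apply intervalIntegral.tendsto_integral_filter_of_dominated_convergence (fun _ => (n:ℝ))
      · refine Eventually.of_forall fun N => ?_
        refine Continuous.aestronglyMeasurable ?_
        exact ((hS N).max continuous_const).comp (continuous_circleMap c R)
      · refine Eventually.of_forall fun N => Eventually.of_forall fun θ _ => ?_
        rw [Real.norm_eq_abs, abs_le]
        refine ⟨le_max_right _ _, max_le ?_ (by have : (0:ℝ) ≤ n := by positivity
                                                linarith)⟩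
        have : ∑ k ∈ Finset.range N, t k (circleMap c R θ) ≤ 0 :=
          Finset.sum_nonpos (fun k _ => hneg k _ (hsph θ))
        exact this.trans (by positivity)
      · exact intervalIntegrable_const
      · refine Eventually.of_forall fun θ _ => ?_
        have h1 : Tendsto (fun N => ((∑ k ∈ Finset.range N, t k (circleMap c R θ) : ℝ) : EReal)) atTop (𝓝 (u (circleMap c R θ))) :=
          tendsto_atTop_iInf (hanti _ (hsph θ))
        have h2 : Tendsto (fun N => max ((∑ k ∈ Finset.range N, t k (circleMap c R θ) : ℝ) : EReal) (-(n : ℝ) : EReal)) atTop (𝓝 (max (u (circleMap c R θ)) (-(n : ℝ) : EReal))) :=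
          h1.max tendsto_const_nhds
        have hb : (max (u (circleMap c R θ)) (-(n : ℝ) : EReal)) ≠ ⊥ := by
          apply ne_of_gt
          refine lt_of_lt_of_le ?_ (le_max_right _ _)
          exact EReal.bot_lt_coe (-(n:ℝ))
        have ht : (max (u (circleMap c R θ)) (-(n : ℝ) : EReal)) ≠ ⊤ := by
          apply ne_of_lt
          refine max_lt ?_ (EReal.coe_lt_top (-(n:ℝ)))
          refine lt_of_le_of_lt (iInf_le _ 0) ?_
          simp
        have h3 := (EReal.tendsto_toReal ht hb).comp h2
        refine h3.congr fun N => ?_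
        simp only [Function.comp]
        rw [← EReal.coe_neg]
        rw [← (EReal.coe_strictMono.monotone).map_max, EReal.toReal_coe]
    have hle : ∀ N, ∑ k ∈ Finset.range N, t k c ≤ Real.circleAverage (fun x => max (∑ k ∈ Finset.range N, t k x) (-(n:ℝ))) c R := by
      intro N
      have hci : ∀ k, CircleIntegrable (t k) c R := fun k => (hc k).continuousOn.circleIntegrable hR.le
      calc ∑ k ∈ Finset.range N, t k c ≤ ∑ k ∈ Finset.range N, Real.circleAverage (t k) c R :=
            Finset.sum_le_sum fun k _ => hsub k c R hR
        _ = Real.circleAverage (fun x => ∑ k ∈ Finset.range N, t k x) c R := by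
            rw [Real.circleAverage_fun_sum (fun k _ => hci k)]
        _ ≤ _ := by
            apply Real.circleAverage_mono ((hS N).continuousOn.circleIntegrable hR.le)
              (((hS N).max continuous_const).continuousOn.circleIntegrable hR.le)
            intro x _
            exact le_max_left _ _
    have key' : Tendsto (fun N => ((Real.circleAverage (fun x => max (∑ k ∈ Finset.range N, t k x) (-(n:ℝ))) c R : ℝ) : EReal)) atTop
        (𝓝 (circleAvgTrunc u c R n : EReal)) := (continuous_coe_real_ereal.tendsto _).comp key
    refine le_of_tendsto_of_tendsto' (tendsto_atTop_iInf (hanti c hcΩ)) key' ?_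
    intro N
    exact EReal.coe_le_coe_iff.2 (hle N)

lemma B1 (E : Set ℂ) (w : ℂ) (s : ℝ) (hs : 0 < s) (hE : E ⊆ closedBall w s)
    (H : ∀ ε : ℝ, 0 < ε → ∃ n : ℕ, 1 ≤ n ∧ ∃ z : ℕ → ℂ, (∀ i, z i ∈ E) ∧
      ∀ x ∈ E, ∏ i ∈ Finset.range n, ‖x - z i‖ ≤ ε ^ n) :
    ∃ u : ℂ → EReal, SubharmonicOn u (ball w (s+2)) ∧ (∃ x ∈ ball w (s+2), u x ≠ ⊥) ∧ ∀ x ∈ E, u x = ⊥ := by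
  set ε : ℕ → ℝ := fun k => Real.exp (-(2:ℝ)^k) with hε
  have hεpos : ∀ k, 0 < ε k := fun k => Real.exp_pos _
  have hε1 : ∀ k, ε k ≤ 1 := fun k => by
    rw [hε]; simp only; rw [Real.exp_le_one_iff]; simp
  choose n hn z hzE hz using fun k => H (ε k) (hεpos k)
  set T : ℝ := 2 * s + 2 with hT
  have hT1 : 1 ≤ T := by linarith
  have hlT : 0 ≤ Real.log T := Real.log_nonneg hT1
  set P : ℕ → ℂ → ℝ := fun k x => ∏ i ∈ Finset.range (n k), ‖x - z k i‖ with hP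
  have hnpos : ∀ k, (0:ℝ) < n k := fun k => by exact_mod_cast hn k
  set t : ℕ → ℂ → ℝ := fun k x => (1/2)^k * ((n k : ℝ)⁻¹ * Real.log (max (P k x) (ε k ^ n k)) - Real.log T) with ht
  have hlc : ∀ k, Continuous (fun x : ℂ => Real.log (max (P k x) (ε k ^ n k))) := by
    intro k
    refine Continuous.log (by fun_prop) ?_
    intro x
    exact (lt_of_lt_of_le (pow_pos (hεpos k) _) (le_max_right _ _)).ne'
  have htc : ∀ k, Continuous (t k) := by
    intro k
    exact continuous_const.mul ((continuous_const.mul (hlc k)).sub continuous_const)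
  refine ⟨_, subharmonic_sum t (ball w (s+2)) htc ?_ ?_, ?_, ?_⟩
  · intro k x hx
    rw [ht]
    simp only
    refine mul_nonpos_of_nonneg_of_nonpos (by positivity) ?_
    have hPle : P k x ≤ T ^ n k := by
      rw [hP]
      simp only
      calc _ ≤ ∏ i ∈ Finset.range (n k), T := by
            apply Finset.prod_le_prod (fun _ _ => norm_nonneg _)
            intro i _
            have h1 := hE (hzE k i)
            rw [mem_closedBall] at h1
            rw [mem_ball] at hx
            rw [← dist_eq_norm]
            linarith [dist_triangle x w (z k i), dist_comm w (z k i)]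
        _ = _ := by simp
    have hm : max (P k x) (ε k ^ n k) ≤ T ^ n k := by
      apply max_le hPle
      exact pow_le_pow_left₀ (hεpos k).le ((hε1 k).trans hT1) _
    have := Real.log_le_log (lt_of_lt_of_le (pow_pos (hεpos k) _) (le_max_right _ _)) hm
    rw [Real.log_pow] at this
    rw [sub_nonpos, inv_mul_le_iff₀ (hnpos k)]
    exact this
  · intro k c R hR
    have h := submean_log (n k) (z k) (ε k ^ n k) (pow_pos (hεpos k) _) c R hR
    have e : Real.circleAverage (t k) c R = (1/2)^k * ((n k : ℝ)⁻¹ * Real.circleAverage (fun x => Real.log (max (P k x) (ε k ^ n k))) c R - Real.log T) := by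
      have h1 : t k = (fun x => ((1/2:ℝ)^k * (n k : ℝ)⁻¹) • (Real.log (max (P k x) (ε k ^ n k))) - (1/2)^k * Real.log T) := by
        ext x; simp only [ht, smul_eq_mul]; ring
      rw [h1, Real.circleAverage_fun_sub (f₁ := fun x => ((1/2:ℝ)^k * (n k : ℝ)⁻¹) • (Real.log (max (P k x) (ε k ^ n k)))) (ContinuousOn.circleIntegrable hR.le (Continuous.continuousOn (by have := hlc k; fun_prop))) (circleIntegrable_const _ _ _),
        Real.circleAverage_fun_smul, Real.circleAverage_const, smul_eq_mul]
      ring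
    rw [e]
    simp only [ht]
    gcongr
  · refine ⟨w + ((s + 1 : ℝ) : ℂ), ?_, ?_⟩
    · rw [mem_ball, dist_eq_norm, add_sub_cancel_left, Complex.norm_real, Real.norm_eq_abs, abs_of_pos (by linarith)]
      linarith
    · set x0 : ℂ := w + ((s + 1 : ℝ) : ℂ) with hx0
      apply ne_of_gt
      refine lt_of_lt_of_le (EReal.bot_lt_coe (-(2 * Real.log T))) ?_
      refine le_iInf fun N => ?_
      rw [EReal.coe_le_coe_iff]
      have hP1 : ∀ k, 1 ≤ P k x0 := by
        intro k
        rw [hP]; simp only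
        rw [← Finset.prod_const_one (s := Finset.range (n k))]
        apply Finset.prod_le_prod (fun _ _ => zero_le_one)
        intro i _
        have h1 := hE (hzE k i)
        rw [mem_closedBall, dist_eq_norm] at h1
        have h2 : ‖x0 - w‖ = s + 1 := by
          rw [hx0, add_sub_cancel_left, Complex.norm_real, Real.norm_eq_abs, abs_of_pos (by linarith)]
        have h3 := norm_sub_le_norm_sub_add_norm_sub x0 (z k i) w
        show 1 ≤ ‖x0 - z k i‖
        linarith
      have htk : ∀ k, - ((1/2)^k * Real.log T) ≤ t k x0 := by
        intro k
        simp only [ht]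
        have : 0 ≤ Real.log (max (P k x0) (ε k ^ n k)) := Real.log_nonneg ((hP1 k).trans (le_max_left _ _))
        have h5 : 0 ≤ (n k : ℝ)⁻¹ * Real.log (max (P k x0) (ε k ^ n k)) := mul_nonneg (inv_nonneg.2 (hnpos k).le) this
        rw [← mul_neg]
        gcongr
        linarith
      calc -(2 * Real.log T) ≤ ∑ k ∈ Finset.range N, -((1/2)^k * Real.log T) := by
            rw [Finset.sum_neg_distrib, ← Finset.sum_mul]
            gcongr
            calc _ ≤ ∑' k : ℕ, (1/2:ℝ)^k := Summable.sum_le_tsum _ (fun _ _ => by positivity) summable_geometric_two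
              _ = 2 := tsum_geometric_two
        _ ≤ _ := Finset.sum_le_sum (fun k _ => htk k)
  · intro x hx
    have htk : ∀ k, t k x ≤ -1 := by
      intro k
      simp only [ht]
      rw [max_eq_right (hz k x hx), Real.log_pow, inv_mul_cancel_left₀ (hnpos k).ne', hε]
      simp only [Real.log_exp]
      have : (1/2:ℝ)^k * 2^k = 1 := by rw [← mul_pow]; norm_num
      nlinarith [mul_nonneg (show (0:ℝ) ≤ (1/2)^k by positivity) hlT]
    rw [iInf_eq_bot]
    intro b hb
    induction b with
    | bot => exact absurd hb (lt_irrefl _)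
    | top => exact ⟨0, by simp⟩
    | coe y =>
      obtain ⟨N, hN⟩ := exists_nat_gt (-y)
      refine ⟨N, ?_⟩
      rw [EReal.coe_lt_coe_iff]
      calc ∑ k ∈ Finset.range N, t k x ≤ ∑ k ∈ Finset.range N, (-1:ℝ) := Finset.sum_le_sum fun k _ => htk k
        _ = -N := by simp
        _ < y := by linarith


lemma lint_radial (φ : ℝ → ℝ≥0∞) (hφ : Measurable φ) :
    ∫⁻ z : ℂ, φ ‖z‖ = ENNReal.ofReal (2 * Real.pi) * ∫⁻ r in Ioi (0:ℝ), ENNReal.ofReal r * φ r := by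
  rw [← Complex.lintegral_comp_polarCoord_symm]
  have h1 : polarCoord.target = Ioi (0:ℝ) ×ˢ Ioo (-Real.pi) Real.pi := rfl
  rw [h1, Measure.volume_eq_prod, ← Measure.prod_restrict, lintegral_prod _ (by
    apply Measurable.aemeasurable
    simp only [Complex.norm_polarCoord_symm]
    fun_prop)]
  simp only [Complex.norm_polarCoord_symm, smul_eq_mul, lintegral_const, Measure.restrict_apply MeasurableSet.univ, univ_inter, Real.volume_Ioo]
  rw [lintegral_mul_const' _ _ (by finiteness), mul_comm]
  congr 1
  · congr 1; ring
  · apply setLIntegral_congr_fun measurableSet_Ioi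
    intro r hr
    simp only
    rw [abs_of_pos hr]

lemma lint_translate (F : ℂ → ℝ≥0∞) (a : ℂ) : ∫⁻ z : ℂ, F (z - a) = ∫⁻ z, F z :=
  lintegral_sub_right_eq_self F a

lemma R1 (a : ℂ) (ρ : ℝ) :
    ∫⁻ z in ball a ρ, ENNReal.ofReal ‖z - a‖⁻¹ = ENNReal.ofReal (2 * Real.pi * ρ) := by
  rw [← lintegral_indicator measurableSet_ball]
  have : ∀ z, (ball a ρ).indicator (fun z => ENNReal.ofReal ‖z - a‖⁻¹) z = 
      (fun y : ℂ => (Iio ρ).indicator (fun r => ENNReal.ofReal r⁻¹) ‖y‖) (z - a) := by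
    intro z
    simp only [indicator, mem_ball, dist_eq_norm, mem_Iio]
  rw [lintegral_congr this, lint_translate (fun y : ℂ => (Iio ρ).indicator (fun r => ENNReal.ofReal r⁻¹) ‖y‖) a, lint_radial _ (by exact Measurable.indicator (by fun_prop) measurableSet_Iio), ENNReal.ofReal_mul (p := 2 * Real.pi) (by positivity)]
  congr 1
  have : ∀ r ∈ Ioi (0:ℝ), ENNReal.ofReal r * (Iio ρ).indicator (fun r => ENNReal.ofReal r⁻¹) r = (Iio ρ).indicator (fun _ => 1) r := by
    intro r hr
    simp only [indicator]
    split_ifs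
    · rw [← ENNReal.ofReal_mul (le_of_lt hr), mul_inv_cancel₀ (ne_of_gt hr), ENNReal.ofReal_one]
    · simp
  rw [setLIntegral_congr_fun measurableSet_Ioi this, lintegral_indicator measurableSet_Iio, lintegral_const, Measure.restrict_apply MeasurableSet.univ, univ_inter, Measure.restrict_apply measurableSet_Iio, Iio_inter_Ioi]
  simp

lemma R2 (a : ℂ) (δ R : ℝ) (hδ : 0 < δ) (hR : δ ≤ R) :
    ∫⁻ z in (ball a R \ ball a δ), ENNReal.ofReal (‖z - a‖⁻¹ ^ 2) = ENNReal.ofReal (2 * Real.pi * Real.log (R / δ)) := by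
  rw [← lintegral_indicator (measurableSet_ball.diff measurableSet_ball)]
  have : ∀ z, (ball a R \ ball a δ).indicator (fun z => ENNReal.ofReal (‖z - a‖⁻¹ ^ 2)) z = 
      (fun y : ℂ => (Ico δ R).indicator (fun r => ENNReal.ofReal (r⁻¹ ^ 2)) ‖y‖) (z - a) := by
    intro z
    have e : z ∈ (ball a R \ ball a δ) ↔ ‖z - a‖ ∈ Ico δ R := by
      simp [dist_eq_norm, and_comm]
    by_cases h : z ∈ (ball a R \ ball a δ)
    · simp only [indicator_of_mem h, indicator_of_mem (e.1 h)]
    · simp only [indicator_of_notMem h, indicator_of_notMem (fun h' => h (e.2 h'))]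
  rw [lintegral_congr this, lint_translate (fun y : ℂ => (Ico δ R).indicator (fun r => ENNReal.ofReal (r⁻¹ ^ 2)) ‖y‖) a, lint_radial _ (by exact Measurable.indicator (by fun_prop) measurableSet_Ico), ENNReal.ofReal_mul (p := 2 * Real.pi) (by positivity)]
  congr 1
  have : ∀ r ∈ Ioi (0:ℝ), ENNReal.ofReal r * (Ico δ R).indicator (fun r => ENNReal.ofReal (r⁻¹ ^ 2)) r = (Ico δ R).indicator (fun r => ENNReal.ofReal r⁻¹) r := by
    intro r hr
    simp only [indicator]
    split_ifs
    · rw [← ENNReal.ofReal_mul (le_of_lt hr)]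
      congr 1
      have : r ≠ 0 := ne_of_gt hr
      field_simp
    · simp
  rw [setLIntegral_congr_fun measurableSet_Ioi this, lintegral_indicator measurableSet_Ico, Measure.restrict_restrict measurableSet_Ico,
    inter_eq_left.2 (show Ico δ R ⊆ Ioi (0:ℝ) from fun r hr => lt_of_lt_of_le hδ hr.1), Measure.restrict_congr_set Ico_ae_eq_Ioc]
  rw [← integral_inv_of_pos hδ (by linarith), intervalIntegral.integral_of_le hR, ofReal_integral_eq_lintegral_ofReal]
  · have := (intervalIntegral.intervalIntegrable_inv (μ := volume) (a := δ) (b := R) (f := id) (by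
      intro x hx
      rw [uIcc_of_le hR] at hx
      exact (lt_of_lt_of_le hδ hx.1).ne') continuousOn_id)
    rw [intervalIntegrable_iff_integrableOn_Ioc_of_le hR] at this
    exact this
  · filter_upwards [ae_restrict_mem measurableSet_Ioc] with r hr
    have := lt_trans hδ hr.1
    simp only [Pi.zero_apply]; positivity

lemma pair_bound (B : Set ℂ) (a b : ℂ) (R : ℝ) (hab : a ≠ b) (hd : ‖a - b‖ ≤ 2 * R)
    (ha : B ⊆ ball a R) (hb : B ⊆ ball b R) :
    ∫⁻ z in B, ENNReal.ofReal (‖z - a‖⁻¹ * ‖z - b‖⁻¹) ≤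
      ENNReal.ofReal (4 * Real.pi + 2 * Real.pi * Real.log (2 * R / ‖a - b‖)) := by
  set d := ‖a - b‖ with hdd
  have hd0 : 0 < d := norm_pos_iff.2 (sub_ne_zero.2 hab)
  have side : ∀ a b : ℂ, ‖a - b‖ = d → ∫⁻ z in ball a (d/2), ENNReal.ofReal (‖z - a‖⁻¹ * ‖z - b‖⁻¹) ≤ ENNReal.ofReal (2 * Real.pi) := by
    intro a b hab
    calc _ ≤ ∫⁻ z in ball a (d/2), ENNReal.ofReal (2/d) * ENNReal.ofReal ‖z - a‖⁻¹ := by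
          apply setLIntegral_mono' measurableSet_ball
          intro z hz
          rw [← ENNReal.ofReal_mul (by positivity), mul_comm]
          apply ENNReal.ofReal_le_ofReal
          gcongr
          rw [mem_ball, dist_eq_norm] at hz
          have : d ≤ ‖z - b‖ + ‖z - a‖ := by
            rw [← hab]
            have := norm_sub_le (z - b) (z - a)
            rwa [sub_sub_sub_cancel_left] at this
          rw [← inv_div]
          apply inv_anti₀ (by positivity)
          linarith
      _ = _ := by
          rw [lintegral_const_mul' _ _ (by finiteness), R1 a _, ← ENNReal.ofReal_mul (by positivity)]
          congr 1
          field_simp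
  have hsub : B ⊆ (ball a (d/2) ∪ ball b (d/2)) ∪ (B \ (ball a (d/2) ∪ ball b (d/2))) := by
    intro z hz; by_cases h : z ∈ (ball a (d/2) ∪ ball b (d/2))
    · exact Or.inl h
    · exact Or.inr ⟨hz, h⟩
  have hlog : 0 ≤ Real.log (2 * R / d) := Real.log_nonneg (by rw [le_div_iff₀ hd0]; linarith)
  have outer : ∫⁻ z in (B \ (ball a (d/2) ∪ ball b (d/2))), ENNReal.ofReal (‖z - a‖⁻¹ * ‖z - b‖⁻¹) ≤ ENNReal.ofReal (2 * Real.pi * Real.log (2 * R / d)) := by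
    calc _ ≤ ∫⁻ z in (B \ (ball a (d/2) ∪ ball b (d/2))), (ENNReal.ofReal (1/2) * ENNReal.ofReal (‖z - a‖⁻¹ ^ 2) + ENNReal.ofReal (1/2) * ENNReal.ofReal (‖z - b‖⁻¹ ^ 2)) := by
          apply lintegral_mono
          intro z
          simp only
          rw [← ENNReal.ofReal_mul (by norm_num), ← ENNReal.ofReal_mul (by norm_num), ← ENNReal.ofReal_add (by positivity) (by positivity)]
          apply ENNReal.ofReal_le_ofReal
          nlinarith [sq_nonneg (‖z - a‖⁻¹ - ‖z - b‖⁻¹)]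
      _ = ENNReal.ofReal (1/2) * (∫⁻ z in (B \ (ball a (d/2) ∪ ball b (d/2))), ENNReal.ofReal (‖z - a‖⁻¹ ^ 2)) + ENNReal.ofReal (1/2) * (∫⁻ z in (B \ (ball a (d/2) ∪ ball b (d/2))), ENNReal.ofReal (‖z - b‖⁻¹ ^ 2)) := by
          rw [lintegral_add_left (by fun_prop), lintegral_const_mul' _ _ (by finiteness), lintegral_const_mul' _ _ (by finiteness)]
      _ ≤ ENNReal.ofReal (1/2) * ENNReal.ofReal (2 * Real.pi * Real.log (2 * R / d)) + ENNReal.ofReal (1/2) * ENNReal.ofReal (2 * Real.pi * Real.log (2 * R / d)) := by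
          have e : 2 * R / d = R / (d/2) := by field_simp
          rw [e]
          gcongr
          · rw [← R2 a (d/2) R (by positivity) (by linarith)]
            apply lintegral_mono_set
            intro z hz
            exact ⟨ha hz.1, fun h => hz.2 (Or.inl h)⟩
          · rw [← R2 b (d/2) R (by positivity) (by linarith)]
            apply lintegral_mono_set
            intro z hz
            exact ⟨hb hz.1, fun h => hz.2 (Or.inr h)⟩
      _ = _ := by
          rw [← ENNReal.ofReal_mul (by norm_num), ← ENNReal.ofReal_add (by positivity) (by positivity)]
          congr 1; ring
  calc _ ≤ _ := lintegral_mono_set hsub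
    _ ≤ _ := lintegral_union_le _ _ _
    _ ≤ _ := add_le_add (lintegral_union_le _ _ _) outer
    _ ≤ (ENNReal.ofReal (2 * Real.pi) + ENNReal.ofReal (2 * Real.pi)) + ENNReal.ofReal (2 * Real.pi * Real.log (2 * R / d)) := by
        gcongr
        · exact side a b rfl
        · simp_rw [mul_comm (‖_ - a‖⁻¹)]
          exact side b a (by rw [norm_sub_rev])
    _ = _ := by
        rw [← ENNReal.ofReal_add (by positivity) (by positivity), ← ENNReal.ofReal_add (by positivity) (by positivity)]
        congr 1; ring


noncomputable def greedy (F : ℕ → (ℕ → ℂ) → ℂ) (x0 : ℂ) : ℕ → ℂ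
  | n => F n (fun i => if _h : i < n then greedy F x0 i else x0)

lemma G1 (E : Set ℂ) (x0 : ℂ) (hx0 : x0 ∈ E) (ε : ℝ) 
    (H : ∀ n, 1 ≤ n → ∀ z : ℕ → ℂ, (∀ i, z i ∈ E) → ∃ x ∈ E, ε ^ n < ∏ i ∈ Finset.range n, ‖x - z i‖) :
    ∃ z : ℕ → ℂ, (∀ i, z i ∈ E) ∧ ∀ n, ε ^ n ≤ ∏ i ∈ Finset.range n, ‖z n - z i‖ := by
  have H' : ∀ n, ∀ z : ℕ → ℂ, ∃ x ∈ E, (∀ i, z i ∈ E) → ε ^ n ≤ ∏ i ∈ Finset.range n, ‖x - z i‖ := by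
    intro n z
    by_cases hz : ∀ i, z i ∈ E
    · rcases Nat.eq_zero_or_pos n with h | h
      · subst h; exact ⟨x0, hx0, by simp⟩
      · obtain ⟨x, hx, h⟩ := H n h z hz
        exact ⟨x, hx, fun _ => h.le⟩
    · exact ⟨x0, hx0, fun h => absurd h hz⟩
  choose F hF1 hF2 using H'
  refine ⟨greedy F x0, ?_, ?_⟩
  · intro i
    rw [greedy]; exact hF1 _ _
  · intro n
    have := hF2 n (fun i => if _h : i < n then greedy F x0 i else x0) (by
      intro i
      by_cases h : i < n
      · simp only [h, dite_true]; rw [greedy]; exact hF1 _ _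
      · simp only [h, dite_false]; exact hx0)
    refine this.trans (le_of_eq ?_)
    apply Finset.prod_congr rfl
    intro i hi
    rw [Finset.mem_range] at hi
    simp only [hi, dite_true]
    conv_rhs => rw [greedy]

lemma G2 (z : ℕ → ℂ) (ε : ℝ) (hε : 0 < ε) (hz : ∀ n, ε ^ n ≤ ∏ i ∈ Finset.range n, ‖z n - z i‖) :
    ∀ i j, i ≠ j → z i ≠ z j := by
  have : ∀ i j, i < j → z j ≠ z i := by
    intro i j hij h
    have h1 := hz j
    rw [Finset.prod_eq_zero (Finset.mem_range.2 hij) (by rw [h]; simp)] at h1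
    exact absurd h1 (not_le.2 (by positivity))
  intro i j hij
  rcases lt_or_gt_of_ne hij with h | h
  · exact (this i j h).symm
  · exact this j i h

lemma G3 (z : ℕ → ℂ) (ε : ℝ) (hε : 0 < ε) (hz : ∀ n, ε ^ n ≤ ∏ i ∈ Finset.range n, ‖z n - z i‖) (n : ℕ) :
    ∑ i ∈ Finset.range n, ∑ j ∈ Finset.range n, (- Real.log ‖z i - z j‖) ≤ |Real.log ε| * n ^ 2 := by
  have hne := G2 z ε hε hz
  induction n with
  | zero => simp
  | succ n ih =>
    have h1 : ∑ j ∈ Finset.range n, (- Real.log ‖z n - z j‖) ≤ |Real.log ε| * n := by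
      rw [Finset.sum_neg_distrib, ← Real.log_prod (fun i hi => by
        rw [Finset.mem_range] at hi
        exact norm_ne_zero_iff.2 (sub_ne_zero.2 (hne n i hi.ne')))]
      have := Real.log_le_log (by positivity) (hz n)
      rw [Real.log_pow] at this
      have h2 := neg_le_abs (Real.log ε)
      have h3 : (0:ℝ) ≤ n := by positivity
      nlinarith
    have h2 : ∑ i ∈ Finset.range n, (- Real.log ‖z i - z n‖) ≤ |Real.log ε| * n := by
      simp_rw [fun i => norm_sub_rev (z i) (z n)]; exact h1
    simp only [Finset.sum_range_succ, Finset.sum_add_distrib, sub_self, norm_zero, Real.log_zero, neg_zero, add_zero]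
    push_cast
    nlinarith [abs_nonneg (Real.log ε)]

lemma G4 (E : Set ℂ) (w : ℂ) (s R0 R : ℝ) (hEs : E ⊆ closedBall w s)
    (hR1 : 1 ≤ R) (hR : R0 + s ≤ R) (hsR : s ≤ R) (z : ℕ → ℂ) (hzE : ∀ i, z i ∈ E) (ε : ℝ) (hε : 0 < ε)
    (hz : ∀ n, ε ^ n ≤ ∏ i ∈ Finset.range n, ‖z n - z i‖) (n : ℕ) (hn : 1 ≤ n) :
    ∫⁻ x in ball w R0, ENNReal.ofReal (((n:ℝ)⁻¹ * ∑ i ∈ Finset.range n, (if ‖x - z i‖ < (n:ℝ)⁻¹ then 0 else ‖x - z i‖⁻¹)) ^ 2)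
      ≤ ENNReal.ofReal (2 * Real.pi * R + 4 * Real.pi + 2 * Real.pi * Real.log (2 * R) + 2 * Real.pi * |Real.log ε|) := by
  have hne := G2 z ε hε hz
  have hn0 : (0:ℝ) < n := by exact_mod_cast hn
  have hn1 : (1:ℝ) ≤ n := by exact_mod_cast hn
  set h : ℕ → ℂ → ℝ := fun i x => if ‖x - z i‖ < (n:ℝ)⁻¹ then 0 else ‖x - z i‖⁻¹ with hh
  have hmeas : ∀ i, Measurable (h i) := by
    intro i
    apply Measurable.ite
    · exact measurableSet_lt (by fun_prop) (by fun_prop)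
    · fun_prop
    · fun_prop
  have h0 : ∀ i x, 0 ≤ h i x := by
    intro i x; simp only [hh]; split_ifs <;> positivity
  have hle : ∀ i x, h i x ≤ ‖x - z i‖⁻¹ := by
    intro i x; simp only [hh]; split_ifs
    · positivity
    · exact le_rfl
  have hB : ∀ i, ball w R0 ⊆ ball (z i) R := by
    intro i
    apply ball_subset_ball'
    have := hEs (hzE i)
    rw [mem_closedBall, dist_comm] at this
    linarith
  set c : ℕ → ℕ → ℝ := fun i j => (if i = j then 2 * Real.pi * R * n else 0) + (4 * Real.pi + 2 * Real.pi * Real.log (2*R) + 2 * Real.pi * (- Real.log ‖z i - z j‖)) with hc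
  have hlogR : 0 ≤ Real.log (2 * R) := Real.log_nonneg (by linarith)
  have hdd : ∀ i j, ‖z i - z j‖ ≤ 2 * R := by
    intro i j
    have h1 := hEs (hzE i)
    have h2 := hEs (hzE j)
    rw [mem_closedBall] at h1 h2
    rw [← dist_eq_norm]
    have := dist_triangle_right (z i) (z j) w
    linarith
  have key : ∀ i j, 0 ≤ c i j ∧ ∫⁻ x in ball w R0, ENNReal.ofReal (h i x * h j x) ≤ ENNReal.ofReal (c i j) := by
    intro i j
    by_cases hij : i = j
    · subst hij
      simp only [hc, if_true, sub_self, norm_zero, Real.log_zero, neg_zero, mul_zero, add_zero]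
      refine ⟨by positivity, ?_⟩
      calc _ ≤ ∫⁻ x in ball (z i) R, ENNReal.ofReal (h i x * h i x) := lintegral_mono_set (hB i)
        _ = ∫⁻ x in ball (z i) R, (ball (z i) (n:ℝ)⁻¹)ᶜ.indicator (fun x => ENNReal.ofReal (‖x - z i‖⁻¹ ^ 2)) x := by
          congr 1; ext x
          by_cases hx : ‖x - z i‖ < (n:ℝ)⁻¹
          · rw [indicator_of_notMem (by simpa [dist_eq_norm] using hx)]
            simp [hh, hx]
          · rw [indicator_of_mem (by simpa [dist_eq_norm] using hx)]
            simp [hh, hx, sq]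
        _ = _ := by
          rw [lintegral_indicator measurableSet_ball.compl, Measure.restrict_restrict measurableSet_ball.compl, inter_comm, ← sdiff_eq,
            R2 (z i) _ R (by positivity) ((inv_le_one_of_one_le₀ hn1).trans hR1)]
        _ ≤ _ := by
          apply ENNReal.ofReal_le_ofReal
          have : Real.log (R / (n:ℝ)⁻¹) ≤ R * n := by
            rw [div_inv_eq_mul]
            have := Real.log_le_sub_one_of_pos (x := R * n) (by positivity)
            linarith
          have h5 : 0 ≤ 4 * Real.pi + 2 * Real.pi * Real.log (2 * R) := by positivity
          have h6 : 2 * Real.pi * Real.log (R / (n:ℝ)⁻¹) ≤ 2 * Real.pi * (R * n) := by gcongr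
          linarith
    · simp only [hc, hij, if_false, zero_add]
      have hpos : 0 < ‖z i - z j‖ := norm_pos_iff.2 (sub_ne_zero.2 (hne i j hij))
      have e : Real.log (2 * R / ‖z i - z j‖) = Real.log (2 * R) - Real.log ‖z i - z j‖ := Real.log_div (by positivity) hpos.ne'
      have e2 : 0 ≤ Real.log (2 * R / ‖z i - z j‖) := Real.log_nonneg (by rw [le_div_iff₀ hpos]; linarith [hdd i j])
      have e3 : 4 * Real.pi + 2 * Real.pi * Real.log (2 * R) + 2 * Real.pi * -Real.log ‖z i - z j‖ = 4 * Real.pi + 2 * Real.pi * Real.log (2 * R / ‖z i - z j‖) := by rw [e]; ring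
      rw [e3]
      refine ⟨by positivity, ?_⟩
      refine le_trans ?_ (pair_bound (ball w R0) (z i) (z j) R (hne i j hij) (hdd i j) (hB i) (hB j))
      apply lintegral_mono
      intro x
      apply ENNReal.ofReal_le_ofReal
      exact mul_le_mul (hle i x) (hle j x) (h0 j x) (by positivity)
  calc _ = ∫⁻ x in ball w R0, ENNReal.ofReal ((n:ℝ)⁻¹^2) * ∑ i ∈ Finset.range n, ∑ j ∈ Finset.range n, ENNReal.ofReal (h i x * h j x) := by
        congr 1; ext x
        rw [mul_pow, ENNReal.ofReal_mul (by positivity), sq (∑ i ∈ Finset.range n, _), Finset.sum_mul_sum, ENNReal.ofReal_sum_of_nonneg (fun i _ => Finset.sum_nonneg (fun j _ => mul_nonneg (h0 i x) (h0 j x)))]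
        congr 1
        apply Finset.sum_congr rfl
        intro i _
        rw [ENNReal.ofReal_sum_of_nonneg (fun j _ => mul_nonneg (h0 i x) (h0 j x))]
    _ = ENNReal.ofReal ((n:ℝ)⁻¹^2) * ∑ i ∈ Finset.range n, ∑ j ∈ Finset.range n, ∫⁻ x in ball w R0, ENNReal.ofReal (h i x * h j x) := by
        rw [lintegral_const_mul' _ _ (by finiteness), lintegral_finsetSum' _ (fun i _ => by
          have := hmeas i
          fun_prop)]
        congr 1
        apply Finset.sum_congr rfl
        intro i _
        rw [lintegral_finsetSum' _ (fun j _ => by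
          have := hmeas i
          have := hmeas j
          fun_prop)]
    _ ≤ ENNReal.ofReal ((n:ℝ)⁻¹^2) * ∑ i ∈ Finset.range n, ∑ j ∈ Finset.range n, ENNReal.ofReal (c i j) := by
        gcongr
        exact (key _ _).2
    _ = ENNReal.ofReal ((n:ℝ)⁻¹^2 * ∑ i ∈ Finset.range n, ∑ j ∈ Finset.range n, c i j) := by
        rw [ENNReal.ofReal_mul (by positivity), ENNReal.ofReal_sum_of_nonneg (fun i _ => Finset.sum_nonneg (fun j _ => (key i j).1))]
        congr 1
        apply Finset.sum_congr rfl
        intro i _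
        rw [ENNReal.ofReal_sum_of_nonneg (fun j _ => (key i j).1)]
    _ ≤ _ := by
        apply ENNReal.ofReal_le_ofReal
        have e1 : ∑ i ∈ Finset.range n, ∑ j ∈ Finset.range n, c i j = (2 * Real.pi * R * n) * n + (4 * Real.pi + 2 * Real.pi * Real.log (2*R)) * n ^ 2 + 2 * Real.pi * ∑ i ∈ Finset.range n, ∑ j ∈ Finset.range n, (- Real.log ‖z i - z j‖) := by
          have e2 : ∀ i ∈ Finset.range n, ∑ j ∈ Finset.range n, c i j = (2 * Real.pi * R * n) + (4 * Real.pi + 2 * Real.pi * Real.log (2*R)) * n + 2 * Real.pi * ∑ j ∈ Finset.range n, (- Real.log ‖z i - z j‖) := by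
            intro i hi
            simp only [hc]
            rw [Finset.sum_add_distrib, Finset.sum_add_distrib, Finset.sum_ite_eq, if_pos hi, ← Finset.mul_sum, Finset.sum_const, Finset.card_range, nsmul_eq_mul]
            ring
          rw [Finset.sum_congr rfl e2, Finset.sum_add_distrib, ← Finset.mul_sum, Finset.sum_const, Finset.card_range, nsmul_eq_mul]
          ring
        have e3 := G3 z ε hε hz n
        rw [e1, inv_pow, inv_mul_le_iff₀ (by positivity)]
        have e4 : 2 * Real.pi * ∑ i ∈ Finset.range n, ∑ j ∈ Finset.range n, (- Real.log ‖z i - z j‖) ≤ 2 * Real.pi * (|Real.log ε| * n ^ 2) := by gcongr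
        nlinarith

noncomputable def gavg (z : ℕ → ℂ) (n : ℕ) (x : ℂ) : ℂ := (n:ℂ)⁻¹ * ∑ i ∈ Finset.range n, (x - z i)⁻¹

lemma gavg_norm (z : ℕ → ℂ) (n : ℕ) (x : ℂ) (a : ℕ → ℝ) (h : ∀ i, ‖(x - z i)⁻¹‖ ≤ a i) :
    ‖gavg z n x‖ ≤ (n:ℝ)⁻¹ * ∑ i ∈ Finset.range n, a i := by
  rw [gavg, norm_mul, norm_inv, Complex.norm_natCast]
  gcongr
  exact norm_sum_le_of_le _ (fun i _ => h i)

lemma avg_const_le (n : ℕ) (a : ℝ) (ha : 0 ≤ a) : (n:ℝ)⁻¹ * ∑ _i ∈ Finset.range n, a ≤ a := by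
  rw [Finset.sum_const, Finset.card_range, nsmul_eq_mul]
  rcases Nat.eq_zero_or_pos n with h | h
  · subst h; simpa using ha
  · have : (n:ℝ) ≠ 0 := by positivity
    rw [← mul_assoc, inv_mul_cancel₀ this, one_mul]

lemma gavg_sub (z : ℕ → ℂ) (n : ℕ) (x y : ℂ) (d : ℝ) (hd : 0 < d) (hx : ∀ i, d ≤ ‖x - z i‖) (hy : ∀ i, d ≤ ‖y - z i‖) :
    ‖gavg z n x - gavg z n y‖ ≤ ‖x - y‖ / d ^ 2 := by
  rw [gavg, gavg, ← mul_sub, ← Finset.sum_sub_distrib, norm_mul, norm_inv, Complex.norm_natCast]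
  refine le_trans ?_ (avg_const_le n (‖x - y‖ / d ^ 2) (by positivity))
  gcongr
  apply norm_sum_le_of_le
  intro i _
  have h1 : x - z i ≠ 0 := norm_pos_iff.1 (hd.trans_le (hx i))
  have h2 : y - z i ≠ 0 := norm_pos_iff.1 (hd.trans_le (hy i))
  rw [inv_sub_inv h1 h2, sub_sub_sub_cancel_right, norm_div, norm_mul, norm_sub_rev, sq]
  gcongr
  · exact hx i
  · exact hy i

lemma B2 (E : Set ℂ) (hE : IsCompact E) (w : ℂ) (s : ℝ) (hs : 0 < s) (hEs : E ⊆ closedBall w s) (x0 : ℂ) (hx0 : x0 ∈ E) (ε : ℝ) (hε : 0 < ε)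
    (H : ∀ n, 1 ≤ n → ∀ z : ℕ → ℂ, (∀ i, z i ∈ E) → ∃ x ∈ E, ε ^ n < ∏ i ∈ Finset.range n, ‖x - z i‖) (R0 : ℝ) (hR0 : 0 ≤ R0) :
    ∃ f : ℂ → ℂ, DifferentiableOn ℂ f Eᶜ ∧ ∫⁻ x in ball w R0 \ E, (‖f x‖₊ : ℝ≥0∞) ^ 2 < ⊤ ∧
      ∀ ρ, s < ρ → ∮ x in C(w, ρ), f x ≠ 0 := by
  obtain ⟨z, hzE, hz⟩ := G1 E x0 hx0 ε H
  have hEne : E.Nonempty := ⟨x0, hx0⟩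
  have hEo : IsOpen Eᶜ := hE.isClosed.isOpen_compl
  set dd : ℂ → ℝ := fun x => infDist x E with hdd
  have hdz : ∀ x i, dd x ≤ ‖x - z i‖ := fun x i => by
    rw [← dist_eq_norm]; exact infDist_le_dist_of_mem (hzE i)
  have hdpos : ∀ x ∈ Eᶜ, 0 < dd x := fun x hx => (hE.isClosed.notMem_iff_infDist_pos hEne).1 hx
  let U : Ultrafilter ℕ := hyperfilter ℕ
  have hU : ∀ N : ℕ, ∀ᶠ n in (U : Filter ℕ), N ≤ n := fun N =>
    (Nat.hyperfilter_le_atTop) (eventually_ge_atTop N)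
  have hlim : ∀ x ∈ Eᶜ, ∃ y, Tendsto (fun n => gavg z n x) U (𝓝 y) := by
    intro x hx
    have hb : ∀ n, gavg z n x ∈ closedBall (0:ℂ) (dd x)⁻¹ := by
      intro n
      rw [mem_closedBall, dist_zero_right]
      refine (gavg_norm z n x (fun _ => (dd x)⁻¹) ?_).trans (avg_const_le n _ (inv_nonneg.2 (hdpos x hx).le))
      intro i
      rw [norm_inv]
      exact inv_anti₀ (hdpos x hx) (hdz x i)
    obtain ⟨y, _, hy⟩ := (isCompact_closedBall (0:ℂ) (dd x)⁻¹).ultrafilter_le_nhds (U.map (fun n => gavg z n x)) (by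
      rw [le_principal_iff]
      exact (Eventually.of_forall hb : ∀ᶠ n in (U : Filter ℕ), gavg z n x ∈ closedBall (0:ℂ) (dd x)⁻¹))
    exact ⟨y, hy⟩
  choose! f hf using hlim
  have hloc : TendstoLocallyUniformlyOn (gavg z) f U Eᶜ := by
    rw [Metric.tendstoLocallyUniformlyOn_iff]
    intro η hη x hx
    have hd := hdpos x hx
    set d := dd x / 2 with hd2
    have hd0 : 0 < d := by positivity
    set r := min d (η * d ^ 2 / 4) with hr
    have hr0 : 0 < r := by positivity
    have hyd : ∀ y ∈ ball x r, d ≤ dd y := by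
      intro y hy
      have h1 := infDist_le_infDist_add_dist (s := E) (x := x) (y := y)
      rw [mem_ball, dist_comm] at hy
      have h2 : r ≤ d := min_le_left _ _
      have h3 : dd x = 2 * d := by rw [hd2]; ring
      simp only [hdd] at h3 ⊢
      linarith
    refine ⟨ball x r, mem_nhdsWithin_of_mem_nhds (ball_mem_nhds x hr0), ?_⟩
    have hg : ∀ y ∈ ball x r, ∀ n, ‖gavg z n x - gavg z n y‖ ≤ η / 4 := by
      intro y hy n
      refine (gavg_sub z n x y d hd0 (fun i => by linarith [hdz x i]) (fun i => (hyd y hy).trans (hdz y i))).trans ?_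
      rw [div_le_iff₀ (by positivity)]
      rw [mem_ball, dist_comm, dist_eq_norm] at hy
      have : r ≤ η * d ^ 2 / 4 := min_le_right _ _
      linarith
    have hfL : ∀ y ∈ ball x r, ‖f x - f y‖ ≤ η / 4 := by
      intro y hy
      have hyE : y ∈ Eᶜ := (hE.isClosed.notMem_iff_infDist_pos hEne).2 (hd0.trans_le (hyd y hy))
      exact le_of_tendsto ((hf x hx).sub (hf y hyE)).norm (Eventually.of_forall (hg y hy))
    filter_upwards [(Metric.tendsto_nhds.1 (hf x hx)) (η/4) (by positivity)] with n hn y hy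
    rw [dist_eq_norm] at hn ⊢
    have h1 := hg y hy n
    have h2 := hfL y hy
    have : f y - gavg z n y = -(f x - f y) - (gavg z n x - f x) + (gavg z n x - gavg z n y) := by ring
    rw [this]
    refine (norm_add_le _ _).trans_lt ?_
    have := norm_sub_le (-(f x - f y)) (gavg z n x - f x)
    rw [norm_neg] at this
    linarith
  have hgdiff : ∀ n, DifferentiableOn ℂ (gavg z n) Eᶜ := by
    intro n x hx
    unfold gavg
    apply DifferentiableAt.differentiableWithinAt
    have : ∀ i, x - z i ≠ 0 := fun i => norm_pos_iff.1 ((hdpos x hx).trans_le (hdz x i))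
    fun_prop (disch := exact this _)
  have hfdiff : DifferentiableOn ℂ f Eᶜ :=
    hloc.differentiableOn (Eventually.of_forall hgdiff) hEo
  have hunif : ∀ K ⊆ Eᶜ, IsCompact K → TendstoUniformlyOn (gavg z) f U K := 
    (tendstoLocallyUniformlyOn_iff_forall_isCompact hEo).1 hloc
  refine ⟨f, hfdiff, ?_, ?_⟩
  · set K : ℕ → Set ℂ := fun m => closedBall w R0 ∩ {x | ((m:ℝ)+1)⁻¹ ≤ dd x} with hK
    have hddc : Continuous dd := continuous_infDist_pt E
    have hKc : ∀ m, IsCompact (K m) := fun m => (isCompact_closedBall w R0).inter_right (isClosed_le (by fun_prop) hddc)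
    have hKE : ∀ m, K m ⊆ Eᶜ := fun m x hx => (hE.isClosed.notMem_iff_infDist_pos hEne).2 (lt_of_lt_of_le (by positivity) hx.2)
    set K' : ℕ → Set ℂ := fun m => ball w R0 ∩ {x | ((m:ℝ)+1)⁻¹ ≤ dd x} with hK'
    have hKK : ∀ m, K' m ⊆ K m := fun m => inter_subset_inter_left _ ball_subset_closedBall
    have hun : ball w R0 \ E ⊆ ⋃ m, K' m := by
      intro x hx
      obtain ⟨m, hm⟩ := exists_nat_one_div_lt (hdpos x hx.2)
      rw [mem_iUnion]
      exact ⟨m, hx.1, by simpa using hm.le⟩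
    have hK'm : ∀ m, MeasurableSet (K' m) := fun m => measurableSet_ball.inter (isClosed_le (by fun_prop) hddc).measurableSet
    set R := max 1 (R0 + s) with hRdef
    set C := ENNReal.ofReal (2 * Real.pi * R + 4 * Real.pi + 2 * Real.pi * Real.log (2 * R) + 2 * Real.pi * |Real.log ε|) with hC
    have hbound : ∀ m, ∫⁻ x in K' m, (‖f x‖₊ : ℝ≥0∞) ^ 2 ≤ 2 * C + 2 * volume (ball w R0) := by
      intro m
      have h1 := Metric.tendstoUniformlyOn_iff.1 (hunif (K m) (hKE m) (hKc m)) 1 one_pos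
      obtain ⟨n, hn1, hn2⟩ := (h1.and (hU (m+1))).exists
      have hnpos : (0:ℝ) < n := by
        have : 0 < n := by omega
        exact_mod_cast this
      calc _ ≤ ∫⁻ x in K' m, (2 * ENNReal.ofReal (((n:ℝ)⁻¹ * ∑ i ∈ Finset.range n, (if ‖x - z i‖ < (n:ℝ)⁻¹ then 0 else ‖x - z i‖⁻¹)) ^ 2) + 2) := by
            apply setLIntegral_mono' (hK'm m)
            intro x hx
            have h2 := hn1 x (hKK m hx)
            rw [dist_eq_norm] at h2
            have h3 : ‖gavg z n x‖ ≤ (n:ℝ)⁻¹ * ∑ i ∈ Finset.range n, (if ‖x - z i‖ < (n:ℝ)⁻¹ then 0 else ‖x - z i‖⁻¹) := by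
              apply gavg_norm
              intro i
              have h4 : (n:ℝ)⁻¹ ≤ ‖x - z i‖ := by
                refine le_trans ?_ (hx.2.trans (hdz x i))
                apply inv_anti₀ (by positivity)
                exact_mod_cast hn2
              rw [if_neg (not_lt.2 h4), norm_inv]
            set A := (n:ℝ)⁻¹ * ∑ i ∈ Finset.range n, (if ‖x - z i‖ < (n:ℝ)⁻¹ then 0 else ‖x - z i‖⁻¹)
            have h5 : ‖f x‖ ≤ A + 1 := by
              have := norm_sub_norm_le (f x) (gavg z n x)
              linarith
            have h6 : ‖f x‖ ^ 2 ≤ 2 * A ^ 2 + 2 := by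
              have : 0 ≤ ‖f x‖ := norm_nonneg _
              nlinarith [sq_nonneg (A - 1)]
            have e : (‖f x‖₊ : ℝ≥0∞) ^ 2 = ENNReal.ofReal (‖f x‖ ^ 2) := by
              rw [ENNReal.ofReal_pow (norm_nonneg _), ofReal_norm]; rfl
            rw [e]
            refine (ENNReal.ofReal_le_ofReal h6).trans ?_
            rw [ENNReal.ofReal_add (by positivity) (by norm_num), ENNReal.ofReal_mul (by norm_num)]
            simp
        _ ≤ ∫⁻ x in ball w R0, (2 * ENNReal.ofReal (((n:ℝ)⁻¹ * ∑ i ∈ Finset.range n, (if ‖x - z i‖ < (n:ℝ)⁻¹ then 0 else ‖x - z i‖⁻¹)) ^ 2) + 2) := 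
            lintegral_mono_set inter_subset_left
        _ ≤ _ := by
            rw [lintegral_add_right _ (by fun_prop), lintegral_const_mul' _ _ (by finiteness), lintegral_const, Measure.restrict_apply MeasurableSet.univ, univ_inter]
            gcongr
            exact G4 E w s R0 R hEs (le_max_left _ _) (le_max_right _ _) (le_trans (by linarith) (le_max_right _ _)) z hzE ε hε hz n (by omega)
    refine (lintegral_mono_set hun).trans_lt ?_
    have hmono : Monotone K' := by
      intro a b hab x hx
      refine ⟨hx.1, show ((b:ℝ)+1)⁻¹ ≤ dd x from le_trans ?_ (show ((a:ℝ)+1)⁻¹ ≤ dd x from hx.2)⟩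
      apply inv_anti₀ (by positivity)
      have : (a:ℝ) ≤ b := by exact_mod_cast hab
      linarith
    rw [setLIntegral_iUnion_of_directed _ hmono.directed_le]
    refine (iSup_le hbound).trans_lt ?_
    have : volume (ball w R0) < ⊤ := measure_ball_lt_top
    finiteness
  · intro ρ hρ hcon
    have hρ0 : 0 < ρ := hs.trans hρ
    have hsph : sphere w ρ ⊆ Eᶜ := by
      intro x hx hxE
      have := hEs hxE
      rw [mem_sphere] at hx
      rw [mem_closedBall] at this
      linarith
    have h1 := Metric.tendstoUniformlyOn_iff.1 (hunif _ hsph (isCompact_sphere w ρ)) (1/(2*ρ)) (by positivity)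
    obtain ⟨n, hn1, hn2⟩ := (h1.and (hU 1)).exists
    have hg : ∮ x in C(w, ρ), gavg z n x = 2 * Real.pi * Complex.I := by
      unfold gavg
      have hzi : ∀ i, z i ∈ ball w ρ := fun i => by
        have := hEs (hzE i)
        rw [mem_closedBall] at this
        rw [mem_ball]; linarith
      rw [circleIntegral.integral_const_mul, circleIntegral.integral_fun_sum]
      · simp_rw [fun i => circleIntegral.integral_sub_inv_of_mem_ball (hzi i)]
        rw [Finset.sum_const, Finset.card_range, nsmul_eq_mul, ← mul_assoc, inv_mul_cancel₀ (by
          have : n ≠ 0 := by omega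
          exact_mod_cast this), one_mul]
      · intro i _
        apply ContinuousOn.circleIntegrable hρ0.le
        apply ContinuousOn.inv₀ (by fun_prop)
        intro x hx
        exact norm_pos_iff.1 ((hdpos x (hsph hx)).trans_le (hdz x i))
    have hfc : CircleIntegrable f w ρ := (hfdiff.continuousOn.mono hsph).circleIntegrable hρ0.le
    have hgc : CircleIntegrable (gavg z n) w ρ := ((hgdiff n).continuousOn.mono hsph).circleIntegrable hρ0.le
    have h2 := circleIntegral.norm_integral_le_of_norm_le_const (f := fun x => f x - gavg z n x) (c := w) (R := ρ) (C := 1/(2*ρ)) hρ0.le (fun x hx => by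
      have := hn1 x hx
      rw [dist_eq_norm] at this
      exact this.le)
    rw [circleIntegral.integral_sub hfc hgc, hcon, hg, zero_sub, norm_neg] at h2
    have e : ‖(2 * Real.pi * Complex.I : ℂ)‖ = 2 * Real.pi := by
      simp [abs_of_pos Real.pi_pos]
    rw [e] at h2
    have e2 : 2 * Real.pi * ρ * (1/(2*ρ)) = Real.pi := by field_simp
    rw [e2] at h2
    linarith [Real.pi_pos]

lemma annulus_preconn (w : ℂ) (a b : ℝ) (ha : 0 < a) (hb : 0 < b) : IsPreconnected {z : ℂ | a < ‖z - w‖ ∧ ‖z - w‖ < b} := by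
  have h : {z : ℂ | a < ‖z - w‖ ∧ ‖z - w‖ < b} = (fun ζ : ℂ => w + Complex.exp ζ) '' (Complex.re ⁻¹' (Ioo (Real.log a) (Real.log b))) := by
    ext z
    simp only [mem_ofPred_eq, mem_image, mem_preimage, mem_Ioo]
    constructor
    · rintro ⟨h1, h2⟩
      have h0 : z - w ≠ 0 := norm_pos_iff.1 (ha.trans h1)
      refine ⟨Complex.log (z - w), ⟨?_, ?_⟩, ?_⟩
      · rw [Complex.log_re]; exact Real.log_lt_log ha h1
      · rw [Complex.log_re]; exact Real.log_lt_log (ha.trans h1) h2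
      · rw [Complex.exp_log h0]; ring
    · rintro ⟨ζ, ⟨h1, h2⟩, rfl⟩
      rw [add_sub_cancel_left, Complex.norm_exp]
      exact ⟨(Real.log_lt_iff_lt_exp ha).1 h1, (Real.lt_log_iff_exp_lt hb).1 h2⟩
  rw [h]
  apply IsPreconnected.image
  · have : Convex ℝ (Complex.re ⁻¹' (Ioo (Real.log a) (Real.log b))) := (convex_Ioo _ _).linear_preimage Complex.reLm
    exact this.isPreconnected
  · fun_prop

lemma forward (D : Set ℂ) (hopen : IsOpen D) (hconn : IsConnected D) (hbd : Bornology.IsBounded D)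
    (w : ℂ) (hw : w ∈ frontier D)
    (hlim : Filter.limsup (fun z => bergmanKernel D z) (𝓝[D] w) < (⊤ : ℝ≥0∞)) :
      ∃ U : Set ℂ, IsOpen U ∧ w ∈ U ∧ PolarSet (U \ D) := by
  have hwD : w ∉ D := by
    rw [hopen.frontier_eq] at hw
    exact hw.2
  have hwc : w ∈ closure D := frontier_subset_closure hw
  obtain ⟨r, hr, M, hM, hK⟩ := A4 w hlim
  obtain ⟨s0, hs0, hext⟩ := A3 hopen hbd w hwc r hr M hM hK
  obtain ⟨d, hd⟩ := hconn.nonempty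
  have hdw : d ≠ w := fun h => hwD (h ▸ hd)
  have hdw' : 0 < dist d w := dist_pos.2 hdw
  set ρ := min s0 (dist d w) with hρ
  have hρ0 : 0 < ρ := lt_min hs0 hdw'
  set E := closedBall w (ρ/2) \ D with hEdef
  have hEc : IsCompact E := (isCompact_closedBall w (ρ/2)).diff hopen
  have hEs : E ⊆ closedBall w (ρ/2) := sdiff_subset
  have hEo : IsOpen Eᶜ := hEc.isClosed.isOpen_compl
  by_cases H : ∀ ε : ℝ, 0 < ε → ∃ n, 1 ≤ n ∧ ∃ z : ℕ → ℂ, (∀ i, z i ∈ E) ∧ ∀ x ∈ E, ∏ i ∈ Finset.range n, ‖x - z i‖ ≤ ε ^ n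
  · obtain ⟨u, hu1, hu2, hu3⟩ := B1 E w (ρ/2) (by positivity) hEs H
    refine ⟨ball w (ρ/2), isOpen_ball, mem_ball_self (by positivity), ?_⟩
    intro z hz
    refine ⟨ball w (ρ/2+2), isOpen_ball, (convex_ball _ _).isConnected ⟨w, mem_ball_self (by positivity)⟩, ball_subset_ball (by linarith) hz.1, u, hu1, hu2, ?_⟩
    intro x hx
    exact hu3 x ⟨ball_subset_closedBall hx.1.1, hx.1.2⟩
  · exfalso
    push Not at H
    obtain ⟨ε, hε, H⟩ := H
    obtain ⟨R0, hR0, hDR⟩ := hbd.subset_ball_lt 0 w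
    obtain ⟨f, hf1, hf2, hf3⟩ := B2 E hEc w (ρ/2) (by positivity) hEs w ⟨mem_closedBall_self (by positivity), hwD⟩ ε hε H R0 hR0.le
    have hDE : D ⊆ Eᶜ := fun x hx hxE => hxE.2 hx
    have hfL : f ∈ L2h D := by
      refine ⟨hf1.mono hDE, lt_of_le_of_lt (lintegral_mono_set ?_) hf2⟩
      exact fun x hx => ⟨hDR hx, hDE hx⟩
    obtain ⟨F, hF1, hF2⟩ := hext f hfL
    have hρs : ρ ≤ s0 := min_le_left _ _
    -- point of D on the circle of radius 3ρ/4
    obtain ⟨x1, hx1D, hx1⟩ : ∃ x1 ∈ D, dist x1 w = 3 * ρ / 4 := by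
      obtain ⟨y, hyD, hy⟩ := Metric.mem_closure_iff.1 hwc (ρ/2) (by positivity)
      have hpre := hconn.isPreconnected.image (fun x => dist x w) (by fun_prop)
      have := hpre.Icc_subset (mem_image_of_mem _ hyD) (mem_image_of_mem _ hd)
      have h3 : (3 * ρ / 4) ∈ Icc (dist y w) (dist d w) := by
        constructor
        · rw [dist_comm]; linarith
        · have : ρ ≤ dist d w := min_le_right _ _
          linarith
      obtain ⟨x1, h1, h2⟩ := this h3
      exact ⟨x1, h1, h2⟩
    set A := {z : ℂ | ρ/2 < ‖z - w‖ ∧ ‖z - w‖ < ρ} with hA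
    have hAo : IsOpen A := by
      have h1 : IsOpen {z : ℂ | ρ/2 < ‖z - w‖} := isOpen_lt (by fun_prop) (by fun_prop)
      have h2 : IsOpen {z : ℂ | ‖z - w‖ < ρ} := isOpen_lt (by fun_prop) (by fun_prop)
      exact h1.inter h2
    have hAE : A ⊆ Eᶜ := fun x hx hxE => by
      have := hEs hxE
      rw [mem_closedBall, dist_eq_norm] at this
      linarith [hx.1]
    have hAB : A ⊆ ball w s0 := fun x hx => by
      rw [mem_ball, dist_eq_norm]; linarith [hx.2]
    have hx1A : x1 ∈ A := by
      rw [dist_eq_norm] at hx1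
      constructor <;> rw [hx1] <;> linarith
    have heq : EqOn F f A := by
      apply AnalyticOnNhd.eqOn_of_preconnected_of_eventuallyEq (𝕜 := ℂ) ((hF1.mono hAB).analyticOnNhd hAo) ((hf1.mono hAE).analyticOnNhd hAo) (annulus_preconn w _ _ (by positivity) hρ0) hx1A
      filter_upwards [hopen.mem_nhds hx1D, hAo.mem_nhds hx1A] with z hz1 hz2
      exact hF2 z ⟨hz1, hAB hz2⟩
    apply hf3 (3*ρ/4) (by linarith)
    have e1 : ∮ x in C(w, 3*ρ/4), f x = ∮ x in C(w, 3*ρ/4), F x := by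
      apply circleIntegral.integral_congr (by positivity)
      intro x hx
      rw [mem_sphere, dist_eq_norm] at hx
      exact (heq (show x ∈ A by constructor <;> rw [hx] <;> linarith)).symm
    rw [e1]
    have hcb : closedBall w (3*ρ/4) ⊆ ball w s0 := closedBall_subset_ball (by linarith)
    apply Complex.circleIntegral_eq_zero_of_differentiable_on_off_countable (by positivity) countable_empty (hF1.continuousOn.mono hcb)
    intro z hz
    exact (hF1 z (hcb (ball_subset_closedBall hz.1))).differentiableAt (isOpen_ball.mem_nhds (hcb (ball_subset_closedBall hz.1)))

lemma alg_ineq1 (a b s τ : ℝ) (hb : 0 < b) (hab : b ≤ a) :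
    (a - b) * (s ^ 2 / a - τ ^ 2 / b) ≤ 2 * (s - τ) ^ 2 - 1 / 2 * (τ ^ 2 * (Real.log a - Real.log b) ^ 2) := by
  have ha : 0 < a := hb.trans_le hab
  set q := Real.sqrt (a / b) with hq
  have hq1 : 1 ≤ q := by
    rw [hq, Real.one_le_sqrt, le_div_iff₀ hb]; linarith
  have hq0 : 0 < q := by linarith
  have hqq : a = b * q ^ 2 := by
    rw [hq, Real.sq_sqrt (by positivity)]; field_simp
  have hlog : Real.log a - Real.log b = 2 * Real.log q := by
    rw [hqq, Real.log_mul hb.ne' (by positivity), Real.log_pow]; push_cast; ring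
  have hlq0 : 0 ≤ Real.log q := Real.log_nonneg hq1
  have hl : 2 * Real.log q ≤ q - q⁻¹ := by
    have := Real.self_le_sinh_iff.2 hlq0
    rw [Real.sinh_log hq0] at this
    linarith
  have h1 : (a - b) * (s ^ 2 / a - τ ^ 2 / b) = (s - τ) ^ 2 - (τ * q - s * q⁻¹) ^ 2 := by
    rw [hqq]; field_simp; ring
  have h2 : (2 * Real.log q) ^ 2 ≤ (q - q⁻¹) ^ 2 := by gcongr
  have h3 : τ ^ 2 * (2 * Real.log q) ^ 2 ≤ τ ^ 2 * (q - q⁻¹) ^ 2 := by gcongr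
  have h4 : τ * (q - q⁻¹) = (τ * q - s * q⁻¹) + (s - τ) * q⁻¹ := by ring
  have h5 : (τ * (q - q⁻¹)) ^ 2 ≤ 2 * (τ * q - s * q⁻¹) ^ 2 + 2 * ((s - τ) * q⁻¹) ^ 2 := by
    rw [h4]; nlinarith [sq_nonneg ((τ * q - s * q⁻¹) - (s - τ) * q⁻¹)]
  have h6 : ((s - τ) * q⁻¹) ^ 2 ≤ (s - τ) ^ 2 := by
    rw [mul_pow]
    have : (q⁻¹) ^ 2 ≤ 1 := pow_le_one₀ (by positivity) (inv_le_one_of_one_le₀ hq1)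
    nlinarith [sq_nonneg (s - τ)]
  rw [h1, hlog]
  nlinarith

lemma alg_ineq (a b s τ : ℝ) (ha : 0 < a) (hb : 0 < b) (m : ℝ) (hm : 0 ≤ m) (hms : m ≤ s) (hmt : m ≤ τ) :
    (a - b) * (s ^ 2 / a - τ ^ 2 / b) ≤ 2 * (s - τ) ^ 2 - 1 / 2 * (m ^ 2 * (Real.log a - Real.log b) ^ 2) := by
  rcases le_total b a with h | h
  · have h1 := alg_ineq1 a b s τ hb h
    have h2 : m ^ 2 * (Real.log a - Real.log b) ^ 2 ≤ τ ^ 2 * (Real.log a - Real.log b) ^ 2 := by gcongr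
    linarith
  · have h1 := alg_ineq1 b a τ s ha h
    have h2 : m ^ 2 * (Real.log b - Real.log a) ^ 2 ≤ s ^ 2 * (Real.log b - Real.log a) ^ 2 := by gcongr
    nlinarith

noncomputable def nuC : Measure ℝ := volume.restrict (Ioc 0 (2 * Real.pi))

instance : IsFiniteMeasure nuC := by unfold nuC; infer_instance

noncomputable def Qm : Measure (ℝ × ℂ) := nuC.prod volume

lemma nuC_univ : nuC univ = ENNReal.ofReal (2 * Real.pi) := by
  simp [nuC]

lemma nuC_real : nuC.real univ = 2 * Real.pi := by
  rw [Measure.real, nuC_univ, ENNReal.toReal_ofReal (by positivity)]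

noncomputable def shear (r : ℝ) : (ℝ × ℂ) ≃ᵐ (ℝ × ℂ) where
  toFun p := (p.1, p.2 + circleMap 0 r p.1)
  invFun p := (p.1, p.2 - circleMap 0 r p.1)
  left_inv p := by simp
  right_inv p := by simp
  measurable_toFun := by
    have := (continuous_circleMap 0 r).measurable
    show Measurable (fun p : ℝ × ℂ => (p.1, p.2 + circleMap 0 r p.1))
    fun_prop
  measurable_invFun := by
    have := (continuous_circleMap 0 r).measurable
    show Measurable (fun p : ℝ × ℂ => (p.1, p.2 - circleMap 0 r p.1))
    fun_prop

lemma shear_mp (r : ℝ) : MeasurePreserving (shear r) Qm Qm := by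
  apply MeasurePreserving.skew_product (f := id) (g := fun φ x => x + circleMap 0 r φ) (MeasurePreserving.id _)
  · have := (continuous_circleMap 0 r).measurable
    show Measurable (fun p : ℝ × ℂ => (p.2 + circleMap 0 r p.1))
    fun_prop
  · exact Eventually.of_forall (fun φ => map_add_right_eq_self volume _)

lemma shear_integral {G : Type*} [NormedAddCommGroup G] [NormedSpace ℝ G] (r : ℝ) (F : ℝ × ℂ → G) :
    ∫ p, F (p.1, p.2 + circleMap 0 r p.1) ∂Qm = ∫ p, F p ∂Qm :=
  (shear_mp r).integral_comp' (f := shear r) F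

lemma shear_integrable {G : Type*} [NormedAddCommGroup G] (r : ℝ) (F : ℝ × ℂ → G) (hF : Integrable F Qm) :
    Integrable (fun p : ℝ × ℂ => F (p.1, p.2 + circleMap 0 r p.1)) Qm :=
  (shear_mp r).integrable_comp_of_integrable hF

lemma Qm_snd {G : Type*} [NormedAddCommGroup G] (F : ℂ → G) (hF : Integrable F) : Integrable (fun p : ℝ × ℂ => F p.2) Qm :=
  hF.comp_snd nuC

lemma Qm_snd_int (F : ℂ → ℝ) : ∫ p, F p.2 ∂Qm = 2 * Real.pi * ∫ x, F x := by
  unfold Qm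
  rw [integral_fun_snd, nuC_real, smul_eq_mul]

lemma cauchyC (g : ℂ → ℂ) (y : ℂ) (r : ℝ) (hr : 0 ≤ r) (hg : ContinuousOn g (closedBall y r)) (hg' : ∀ x ∈ ball y r, DifferentiableAt ℂ g x) :
    ∫ φ, g (y + circleMap 0 r φ) * circleMap 0 r φ ∂nuC = 0 := by
  have := Complex.circleIntegral_eq_zero_of_differentiable_on_off_countable hr countable_empty hg (fun z hz => hg' z hz.1)
  rw [circleIntegral, intervalIntegral.integral_of_le (by positivity)] at this
  simp only [deriv_circleMap, smul_eq_mul] at this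
  have h2 : ∀ φ, circleMap 0 r φ * Complex.I * g (circleMap y r φ) = Complex.I * (g (y + circleMap 0 r φ) * circleMap 0 r φ) := by
    intro φ
    have : circleMap y r φ = y + circleMap 0 r φ := by simp [circleMap]
    rw [this]; ring
  simp_rw [h2] at this
  rw [integral_const_mul] at this
  simpa [nuC] using this

lemma circ_inv (y z : ℂ) (r : ℝ) (hr : 0 ≤ r) (h : dist z y ≠ r) :
    ∫ φ, (y + circleMap 0 r φ - z)⁻¹ * circleMap 0 r φ ∂nuC = (ball z r).indicator (fun _ => (2 * Real.pi : ℂ)) y := by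
  rcases lt_or_gt_of_ne h with h | h
  · rw [indicator_of_mem (by rwa [mem_ball, dist_comm])]
    have := circleIntegral.integral_sub_inv_of_mem_ball (c := y) (w := z) (R := r) h
    rw [circleIntegral, intervalIntegral.integral_of_le (by positivity)] at this
    simp only [deriv_circleMap, smul_eq_mul] at this
    have h2 : ∀ φ, circleMap 0 r φ * Complex.I * (circleMap y r φ - z)⁻¹ = Complex.I * ((y + circleMap 0 r φ - z)⁻¹ * circleMap 0 r φ) := by
      intro φ
      have : circleMap y r φ = y + circleMap 0 r φ := by simp [circleMap]
      rw [this]; ring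
    simp_rw [h2] at this
    rw [integral_const_mul, mul_comm (2 * _ : ℂ)] at this
    exact mul_left_cancel₀ Complex.I_ne_zero this
  · rw [indicator_of_notMem (by rw [mem_ball, dist_comm]; linarith)]
    have hne : ∀ x ∈ closedBall y r, x - z ≠ 0 := by
      intro x hx h0
      rw [sub_eq_zero] at h0
      subst h0
      rw [mem_closedBall] at hx
      linarith
    apply cauchyC (fun x => (x - z)⁻¹) y r hr
    · exact ContinuousOn.inv₀ (by fun_prop) hne
    · intro x hx
      have := hne x (ball_subset_closedBall hx)
      fun_prop (disch := assumption)

lemma Qm_bdd {G : Type*} [NormedAddCommGroup G] [MeasurableSpace G] [BorelSpace G] [SecondCountableTopology G] (F : ℝ × ℂ → G) (hF : Measurable F) (C : ℝ) (w : ℂ) (ρ : ℝ) (hC : ∀ p, ‖F p‖ ≤ C)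
    (h0 : ∀ p : ℝ × ℂ, p.2 ∉ ball w ρ → F p = 0) : Integrable F Qm := by
  have h1 : Integrable (fun x : ℂ => (ball w ρ).indicator (fun _ => C) x) := by
    rw [integrable_indicator_iff measurableSet_ball]
    exact integrableOn_const measure_ball_lt_top.ne
  refine (Qm_snd _ h1).mono' hF.aestronglyMeasurable (Eventually.of_forall fun p => ?_)
  by_cases hp : p.2 ∈ ball w ρ
  · rw [indicator_of_mem hp]; exact hC p
  · rw [h0 p hp, indicator_of_notMem hp, norm_zero]

lemma norm_circ (r : ℝ) (hr : 0 ≤ r) (φ : ℝ) : ‖circleMap 0 r φ‖ = r := by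
  rw [norm_circleMap_zero, abs_of_nonneg hr]

lemma sup_nonneg (v q : ℂ → ℝ) (w : ℂ) (ρ : ℝ) (M : ℝ) (hvm : Measurable v) (hv1 : ∀ x, 1 ≤ v x) (hvM : ∀ x, v x ≤ M)
    (hq0 : ∀ x, 0 ≤ q x) (hqs : ∀ x, x ∉ closedBall w ρ → q x = 0) (τ : ℝ → ℂ) (hτ : Measurable τ)
    (hsup : ∀ y ∈ closedBall w ρ, ∫ φ, v (y + τ φ) ∂nuC ≤ 2 * Real.pi * v y)
    (hint : Integrable (fun p : ℝ × ℂ => q p.2 * (v p.2 - v (p.2 + τ p.1))) Qm) :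
    0 ≤ ∫ p, q p.2 * (v p.2 - v (p.2 + τ p.1)) ∂Qm := by
  unfold Qm at hint ⊢
  rw [integral_prod_symm _ hint]
  apply integral_nonneg
  intro x
  simp only [Pi.zero_apply]
  by_cases hx : x ∈ closedBall w ρ
  · have hi : Integrable (fun φ => v (x + τ φ)) nuC := by
      refine Integrable.of_bound (hvm.comp (by fun_prop)).aestronglyMeasurable M (Eventually.of_forall fun φ => ?_)
      rw [Real.norm_eq_abs, abs_of_nonneg (by linarith [hv1 (x + τ φ)])]
      exact hvM _
    rw [integral_const_mul, integral_sub (integrable_const _) hi, integral_const, nuC_real, smul_eq_mul]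
    exact mul_nonneg (hq0 x) (by linarith [hsup x hx])
  · simp [hqs x hx]

lemma cacc (v θ : ℂ → ℝ) (w : ℂ) (a r M : ℝ) (hr : 0 < r) (hra : r < a) (hvm : Measurable v) (hv1 : ∀ x, 1 ≤ v x)
    (hvM : ∀ x, v x ≤ M) (hθm : Measurable θ) (hθ0 : ∀ x, 0 ≤ θ x) (hθ1 : ∀ x, θ x ≤ 1) (hθs : ∀ x, x ∉ closedBall w (5*a) → θ x = 0)
    (hθ2 : ∀ x ∈ ball w (4*a), θ x = 1) (hθL : ∀ x y, |θ x - θ y| ≤ ‖x - y‖ / a)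
    (hsup : ∀ y ∈ closedBall w (5*a), ∫ φ, v (y + circleMap 0 r φ) ∂nuC ≤ 2 * Real.pi * v y)
    (hsup' : ∀ y ∈ closedBall w (5*a), ∫ φ, v (y + (- circleMap 0 r φ)) ∂nuC ≤ 2 * Real.pi * v y) :
    ∫ p, (ball w (3*a)).indicator (fun _ => (1:ℝ)) p.2 * (Real.log (v (p.2 - circleMap 0 r p.1)) - Real.log (v p.2)) ^ 2 ∂Qm
      ≤ 4 * ((r/a)^2 * (2 * Real.pi * volume.real (ball w (7*a)))) := by
  have ha : 0 < a := hr.trans hra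
  have hcm : Measurable (circleMap 0 r) := (continuous_circleMap 0 r).measurable
  have hM1 : 1 ≤ M := (hv1 w).trans (hvM w)
  set q : ℂ → ℝ := fun x => θ x ^ 2 / v x with hq
  have hqm : Measurable q := by fun_prop
  have hv0 : ∀ x, 0 < v x := fun x => by linarith [hv1 x]
  have hq0 : ∀ x, 0 ≤ q x := fun x => div_nonneg (sq_nonneg _) (hv0 x).le
  have hq1 : ∀ x, q x ≤ 1 := fun x => by
    rw [hq, div_le_one (hv0 x)]
    have : θ x ^ 2 ≤ 1 := pow_le_one₀ (hθ0 x) (hθ1 x)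
    linarith [hv1 x]
  have hqs : ∀ x, x ∉ closedBall w (5*a) → q x = 0 := fun x hx => by simp [hq, hθs x hx]
  have hdiff : ∀ x y, |v x - v y| ≤ M := fun x y => by
    rw [abs_le]; constructor <;> linarith [hv1 x, hv1 y, hvM x, hvM y]
  have hlog0 : ∀ x, 0 ≤ Real.log (v x) := fun x => Real.log_nonneg (hv1 x)
  have hlogM : ∀ x, Real.log (v x) ≤ Real.log M := fun x => Real.log_le_log (hv0 x) (hvM x)
  -- integrability
  have hsub : ∀ x : ℂ, ∀ φ, x ∉ ball w (7*a) → x - circleMap 0 r φ ∉ closedBall w (5*a) ∧ x ∉ closedBall w (5*a) := by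
    intro x φ hx
    rw [mem_ball, not_lt, dist_eq_norm] at hx
    simp only [mem_closedBall, not_le, dist_eq_norm]
    refine ⟨?_, by linarith⟩
    have h1 := norm_sub_norm_le (x - w) (circleMap 0 r φ)
    rw [norm_circ r hr.le, sub_right_comm] at h1
    linarith
  have i1 : Integrable (fun p : ℝ × ℂ => q p.2 * (v p.2 - v (p.2 - circleMap 0 r p.1))) Qm := by
    refine Qm_bdd _ (by fun_prop) M w (7*a) ?_ ?_
    · intro p
      rw [norm_mul, Real.norm_eq_abs, Real.norm_eq_abs, abs_of_nonneg (hq0 _)]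
      calc _ ≤ 1 * M := mul_le_mul (hq1 _) (hdiff _ _) (abs_nonneg _) zero_le_one
        _ = M := one_mul M
    · intro p hp
      rw [hqs _ (hsub p.2 0 hp).2, zero_mul]
  have i1' : Integrable (fun p : ℝ × ℂ => q p.2 * (v p.2 - v (p.2 + circleMap 0 r p.1))) Qm := by
    refine Qm_bdd _ (by fun_prop) M w (7*a) ?_ ?_
    · intro p
      rw [norm_mul, Real.norm_eq_abs, Real.norm_eq_abs, abs_of_nonneg (hq0 _)]
      calc _ ≤ 1 * M := mul_le_mul (hq1 _) (hdiff _ _) (abs_nonneg _) zero_le_one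
        _ = M := one_mul M
    · intro p hp
      rw [hqs _ (hsub p.2 0 hp).2, zero_mul]
  have i2 : Integrable (fun p : ℝ × ℂ => q (p.2 - circleMap 0 r p.1) * (v (p.2 - circleMap 0 r p.1) - v p.2)) Qm := by
    refine Qm_bdd _ (by fun_prop) M w (7*a) ?_ ?_
    · intro p
      rw [norm_mul, Real.norm_eq_abs, Real.norm_eq_abs, abs_of_nonneg (hq0 _)]
      calc _ ≤ 1 * M := mul_le_mul (hq1 _) (hdiff _ _) (abs_nonneg _) zero_le_one
        _ = M := one_mul M
    · intro p hp
      rw [hqs _ (hsub p.2 p.1 hp).1, zero_mul]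
  have iL : Integrable (fun p : ℝ × ℂ => (ball w (3*a)).indicator (fun _ => (1:ℝ)) p.2 * (Real.log (v (p.2 - circleMap 0 r p.1)) - Real.log (v p.2)) ^ 2) Qm := by
    have hind : Measurable ((ball w (3*a)).indicator (fun _ => (1:ℝ))) := measurable_const.indicator measurableSet_ball
    refine Qm_bdd _ (by fun_prop) (Real.log M ^ 2) w (3*a) ?_ ?_
    · intro p
      rw [norm_mul]
      calc _ ≤ 1 * (Real.log M)^2 := by
            apply mul_le_mul _ _ (norm_nonneg _) zero_le_one
            · by_cases h : p.2 ∈ ball w (3*a)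
              · simp [indicator_of_mem h]
              · simp [indicator_of_notMem h]
            · rw [Real.norm_eq_abs, abs_of_nonneg (sq_nonneg _)]
              apply sq_le_sq'
              · linarith [hlog0 (p.2 - circleMap 0 r p.1), hlogM p.2]
              · linarith [hlog0 p.2, hlogM (p.2 - circleMap 0 r p.1)]
        _ = _ := one_mul _
    · intro p hp
      rw [indicator_of_notMem hp, zero_mul]
  have iT : Integrable (fun p : ℝ × ℂ => (ball w (7*a)).indicator (fun _ => (r/a)^2) p.2) Qm := by
    apply Qm_snd
    rw [integrable_indicator_iff measurableSet_ball]
    exact integrableOn_const measure_ball_lt_top.ne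
  -- positivity
  have p1 : 0 ≤ ∫ p, q p.2 * (v p.2 - v (p.2 - circleMap 0 r p.1)) ∂Qm := 
    sup_nonneg v q w (5*a) M hvm hv1 hvM hq0 hqs (fun φ => - circleMap 0 r φ) hcm.neg hsup' i1
  have p1' := sup_nonneg v q w (5*a) M hvm hv1 hvM hq0 hqs (circleMap 0 r) hcm hsup i1'
  have p2 : 0 ≤ ∫ p, q (p.2 - circleMap 0 r p.1) * (v (p.2 - circleMap 0 r p.1) - v p.2) ∂Qm := by
    rw [← shear_integral r]
    simpa using p1'
  have pw : ∀ p : ℝ × ℂ, q p.2 * (v p.2 - v (p.2 - circleMap 0 r p.1)) + q (p.2 - circleMap 0 r p.1) * (v (p.2 - circleMap 0 r p.1) - v p.2)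
      ≤ 2 * (ball w (7*a)).indicator (fun _ => (r/a)^2) p.2 - 1/2 * ((ball w (3*a)).indicator (fun _ => (1:ℝ)) p.2 * (Real.log (v (p.2 - circleMap 0 r p.1)) - Real.log (v p.2)) ^ 2) := by
    intro p
    set x := p.2
    set y := p.2 - circleMap 0 r p.1 with hy
    by_cases hx : x ∈ ball w (7*a)
    · rw [indicator_of_mem hx]
      set m := (ball w (3*a)).indicator (fun _ => (1:ℝ)) x with hm
      have hmm : m ^ 2 = m ∧ 0 ≤ m ∧ m ≤ θ x ∧ m ≤ θ y := by
        by_cases h3 : x ∈ ball w (3*a)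
        · rw [hm, indicator_of_mem h3]
          refine ⟨by norm_num, by norm_num, ?_, ?_⟩
          · rw [hθ2 x (ball_subset_ball (by linarith) h3)]
          · rw [hθ2 y]
            rw [mem_ball, dist_eq_norm] at h3 ⊢
            have h1 := norm_sub_le (x - w) (circleMap 0 r p.1)
            rw [norm_circ r hr.le, sub_right_comm] at h1
            linarith
        · rw [hm, indicator_of_notMem h3]
          exact ⟨by norm_num, le_rfl, hθ0 _, hθ0 _⟩
      have h1 := alg_ineq (v x) (v y) (θ x) (θ y) (hv0 x) (hv0 y) m hmm.2.1 hmm.2.2.1 hmm.2.2.2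
      rw [hmm.1] at h1
      have h2 : (θ x - θ y) ^ 2 ≤ (r/a)^2 := by
        rw [← sq_abs]
        have h3 := hθL x y
        have : ‖x - y‖ = r := by rw [hy, sub_sub_cancel, norm_circ r hr.le]
        rw [this] at h3
        gcongr
      have h3 : (Real.log (v y) - Real.log (v x)) ^ 2 = (Real.log (v x) - Real.log (v y)) ^ 2 := by ring
      rw [h3]
      have h4 : q x * (v x - v y) + q y * (v y - v x) = (v x - v y) * (θ x ^ 2 / v x - θ y ^ 2 / v y) := by
        simp only [hq]; ring
      rw [h4]
      linarith
    · have := hsub x p.1 hx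
      rw [indicator_of_notMem hx, hqs _ this.1, hqs _ this.2, indicator_of_notMem (fun h => hx (ball_subset_ball (by linarith) h))]
      simp
  have := integral_mono (i1.add i2) ((iT.const_mul 2).sub (iL.const_mul (1/2))) pw
  simp only [Pi.add_apply, Pi.sub_apply] at this
  rw [integral_add i1 i2, integral_sub (iT.const_mul 2) (iL.const_mul (1/2)), integral_const_mul, integral_const_mul] at this
  have e : ∫ p : ℝ × ℂ, (ball w (7*a)).indicator (fun _ => (r/a)^2) p.2 ∂Qm = (r/a)^2 * (2 * Real.pi * volume.real (ball w (7*a))) := by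
    rw [Qm_snd_int, integral_indicator measurableSet_ball, setIntegral_const, smul_eq_mul]; ring
  rw [e] at this
  linarith

noncomputable def cut (w : ℂ) (a b : ℝ) (x : ℂ) : ℝ := max 0 (min 1 (b + 1 - ‖x - w‖ / a))

lemma cut_cont (w : ℂ) (a b : ℝ) : Continuous (cut w a b) := by unfold cut; fun_prop
lemma cut_nonneg (w : ℂ) (a b : ℝ) (x : ℂ) : 0 ≤ cut w a b x := le_max_left _ _
lemma cut_le_one (w : ℂ) (a b : ℝ) (x : ℂ) : cut w a b x ≤ 1 := max_le zero_le_one (min_le_left _ _)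
lemma cut_one (w : ℂ) (a b : ℝ) (ha : 0 < a) (x : ℂ) (hx : x ∈ closedBall w (b * a)) : cut w a b x = 1 := by
  rw [mem_closedBall, dist_eq_norm, ← div_le_iff₀ ha] at hx
  unfold cut
  rw [min_eq_left (by linarith), max_eq_right zero_le_one]
lemma cut_zero (w : ℂ) (a b : ℝ) (ha : 0 < a) (x : ℂ) (hx : x ∉ ball w ((b + 1) * a)) : cut w a b x = 0 := by
  rw [mem_ball, not_lt, dist_eq_norm, ← le_div_iff₀ ha] at hx
  unfold cut
  apply max_eq_left
  exact (min_le_right _ _).trans (by linarith)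
lemma cut_lip (w : ℂ) (a b : ℝ) (ha : 0 < a) (x y : ℂ) : |cut w a b x - cut w a b y| ≤ ‖x - y‖ / a := by
  unfold cut
  rw [max_comm 0, max_comm 0, min_comm 1, min_comm 1]
  refine (abs_max_sub_max_le_abs _ _ _).trans ((abs_inf_sub_inf_le_abs _ _ _).trans ?_)
  have : b + 1 - ‖x - w‖ / a - (b + 1 - ‖y - w‖ / a) = (‖y - w‖ - ‖x - w‖) / a := by ring
  rw [this, abs_div, abs_of_pos ha]
  gcongr
  refine (abs_norm_sub_norm_le _ _).trans ?_
  rw [sub_sub_sub_cancel_right, norm_sub_rev]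

lemma Qm_mulbdd (k : ℂ → ℂ) (hk : Integrable k) (b : ℝ × ℂ → ℂ) (hb : Measurable b) (C : ℝ) (hC : ∀ p, ‖b p‖ ≤ C) :
    Integrable (fun p : ℝ × ℂ => k p.2 * b p) Qm := by
  have := (Qm_snd k hk).bdd_mul hb.aestronglyMeasurable (Eventually.of_forall hC)
  refine this.congr (Eventually.of_forall fun p => ?_)
  simp only; ring

lemma inv_int (w z : ℂ) (ρ : ℝ) : Integrable ((ball w ρ).indicator (fun x => (x - z)⁻¹)) := by
  rw [integrable_indicator_iff measurableSet_ball]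
  refine ⟨by fun_prop, ?_⟩
  rw [hasFiniteIntegral_iff_norm]
  have hsub : ball w ρ ⊆ ball z (ρ + dist w z) := ball_subset_ball' le_rfl
  refine (lintegral_mono_set hsub).trans_lt ?_
  simp_rw [norm_inv]
  rw [R1]
  exact ENNReal.ofReal_lt_top

lemma circ_int_zero (r : ℝ) (hr : 0 ≤ r) : ∫ φ, circleMap 0 r φ ∂nuC = 0 := by
  have := cauchyC (fun _ => 1) 0 r hr continuousOn_const (fun x _ => differentiableAt_const _)
  simpa using this

lemma J0 (w z : ℂ) (a r : ℝ) (hr : 0 < r) (hra : r < a) (hz : z ∈ ball w (a/2)) :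
    ∫ p : ℝ × ℂ, (p.2 - z)⁻¹ * (((cut w a 2 (p.2 - circleMap 0 r p.1) - cut w a 2 p.2 : ℝ) : ℂ) * circleMap 0 r p.1) ∂Qm = 2 * Real.pi ^ 2 * r ^ 2 := by
  have ha : 0 < a := hr.trans hra
  have hcm : Measurable (circleMap 0 r) := (continuous_circleMap 0 r).measurable
  set θ := cut w a 2 with hθ
  have hθm : Measurable θ := (cut_cont w a 2).measurable
  have hθb : ∀ x, ‖(θ x : ℂ)‖ ≤ 1 := fun x => by
    rw [Complex.norm_real, Real.norm_eq_abs, abs_of_nonneg (cut_nonneg _ _ _ _)]; exact cut_le_one _ _ _ _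
  set k : ℂ → ℂ := (ball w (7*a)).indicator (fun x => (x - z)⁻¹) with hk
  have hki : Integrable k := inv_int w z (7*a)
  have i1 : Integrable (fun p : ℝ × ℂ => k p.2 * ((θ (p.2 - circleMap 0 r p.1) : ℂ) * circleMap 0 r p.1)) Qm := by
    apply Qm_mulbdd k hki _ (by fun_prop) r
    intro p
    rw [norm_mul, norm_circ r hr.le]
    calc _ ≤ 1 * r := by gcongr; exact hθb _
      _ = r := one_mul r
  have i2 : Integrable (fun p : ℝ × ℂ => k p.2 * ((θ p.2 : ℂ) * circleMap 0 r p.1)) Qm := by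
    apply Qm_mulbdd k hki _ (by fun_prop) r
    intro p
    rw [norm_mul, norm_circ r hr.le]
    calc _ ≤ 1 * r := by gcongr; exact hθb _
      _ = r := one_mul r
  have hout : ∀ x φ, x ∉ ball w (7*a) → θ x = 0 ∧ θ (x - circleMap 0 r φ) = 0 := by
    intro x φ hx
    constructor
    · exact cut_zero w a 2 ha x (fun h => hx (ball_subset_ball (by linarith) h))
    · apply cut_zero w a 2 ha
      rw [mem_ball, not_lt, dist_eq_norm] at hx ⊢
      have h1 := norm_sub_norm_le (x - w) (circleMap 0 r φ)
      rw [norm_circ r hr.le, sub_right_comm] at h1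
      linarith
  have e1 : ∀ p : ℝ × ℂ, (p.2 - z)⁻¹ * (((θ (p.2 - circleMap 0 r p.1) - θ p.2 : ℝ) : ℂ) * circleMap 0 r p.1) 
      = k p.2 * ((θ (p.2 - circleMap 0 r p.1) : ℂ) * circleMap 0 r p.1) - k p.2 * ((θ p.2 : ℂ) * circleMap 0 r p.1) := by
    intro p
    by_cases hp : p.2 ∈ ball w (7*a)
    · rw [hk, indicator_of_mem hp]; push_cast; ring
    · rw [hk, indicator_of_notMem hp, (hout p.2 p.1 hp).1, (hout p.2 p.1 hp).2]; simp
  rw [integral_congr_ae (Eventually.of_forall e1), integral_sub i1 i2]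
  have e2 : ∫ p : ℝ × ℂ, k p.2 * ((θ p.2 : ℂ) * circleMap 0 r p.1) ∂Qm = 0 := by
    have : ∀ p : ℝ × ℂ, k p.2 * ((θ p.2 : ℂ) * circleMap 0 r p.1) = circleMap 0 r p.1 * (k p.2 * (θ p.2 : ℂ)) := fun p => by ring
    simp_rw [this]
    unfold Qm
    rw [integral_prod_mul (fun φ => circleMap 0 r φ) (fun x => k x * (θ x : ℂ)), circ_int_zero r hr.le, zero_mul]
  have i3 := shear_integrable r _ i1
  rw [e2, sub_zero, ← shear_integral r]
  simp only [add_sub_cancel_right] at i3 ⊢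
  unfold Qm at i3 ⊢
  rw [integral_prod_symm _ i3]
  simp only
  have e3 : ∀ᵐ y : ℂ, ∫ φ, k (y + circleMap 0 r φ) * ((θ y : ℂ) * circleMap 0 r φ) ∂nuC = (ball z r).indicator (fun _ => (2 * Real.pi : ℂ)) y := by
    have hs : ∀ᵐ y : ℂ, y ∉ sphere z r := by
      exact measure_eq_zero_iff_ae_notMem.1 (Measure.addHaar_sphere volume z r)
    filter_upwards [hs] with y hy
    rw [mem_sphere, dist_comm] at hy
    rw [← circ_inv y z r hr.le hy]
    by_cases hyz : y ∈ ball z r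
    · have h1 : θ y = 1 := by
        apply cut_one w a 2 ha
        rw [mem_ball] at hyz hz
        rw [mem_closedBall]
        have := dist_triangle y z w
        linarith
      rw [h1]
      congr 1; ext φ
      have : y + circleMap 0 r φ ∈ ball w (7*a) := by
        rw [mem_ball] at hyz hz ⊢
        have := dist_triangle y z w
        have h2 : dist (y + circleMap 0 r φ) w ≤ dist y w + r := by
          rw [dist_eq_norm, dist_eq_norm, add_sub_right_comm]
          refine (norm_add_le _ _).trans ?_
          rw [norm_circ r hr.le]
        linarith
      rw [hk, indicator_of_mem this]; simp
    · rw [circ_inv y z r hr.le hy, indicator_of_notMem hyz]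
      by_cases hyw : y ∈ ball w (3*a)
      · have : ∀ φ, k (y + circleMap 0 r φ) * ((θ y : ℂ) * circleMap 0 r φ) = (θ y : ℂ) * ((y + circleMap 0 r φ - z)⁻¹ * circleMap 0 r φ) := by
          intro φ
          have : y + circleMap 0 r φ ∈ ball w (7*a) := by
            rw [mem_ball] at hyw ⊢
            have h2 : dist (y + circleMap 0 r φ) w ≤ dist y w + r := by
              rw [dist_eq_norm, dist_eq_norm, add_sub_right_comm]
              refine (norm_add_le _ _).trans ?_
              rw [norm_circ r hr.le]
            linarith
          rw [hk, indicator_of_mem this]; ring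
        simp_rw [this]
        rw [integral_const_mul, circ_inv y z r hr.le hy, indicator_of_notMem hyz, mul_zero]
      · have : θ y = 0 := cut_zero w a 2 ha y (fun h => hyw (ball_subset_ball (by linarith) h))
        simp [this]
  rw [integral_congr_ae e3, integral_indicator measurableSet_ball, setIntegral_const, Measure.real, Complex.volume_ball]
  simp only [ENNReal.toReal_mul, ENNReal.toReal_pow, ENNReal.toReal_ofReal hr.le, ENNReal.coe_toReal, NNReal.coe_real_pi, Complex.real_smul]
  push_cast
  ring

lemma C4 (D : Set ℂ) (hD : IsOpen D) (w z : ℂ) (a r L C1 : ℝ) (hr : 0 < r) (hra : r < a) (hz : z ∈ ball w (a/2)) (hzD : z ∈ D)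
    (f : ℂ → ℂ) (hf : DifferentiableOn ℂ f D) (Ψ : ℂ → ℝ) (hΨm : Measurable Ψ) (hΨ0 : ∀ x, 0 ≤ Ψ x) (hΨ1 : ∀ x, Ψ x ≤ 1)
    (hP : ∀ x ∈ ball w (7*a), x ∉ D → Ψ x = 1) (hη : ∀ y ∈ ball w (3*a), Ψ y ≠ 1 → closedBall y r ⊆ D) (hL : 0 < L)
    (hE : ∫ p : ℝ × ℂ, (ball w (3*a)).indicator (fun _ => (1:ℝ)) p.2 * (Ψ (p.2 - circleMap 0 r p.1) - Ψ p.2) ^ 2 ∂Qm ≤ C1 * r ^ 2 / L ^ 2)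
    (hfi : Integrable ((D ∩ ball w (7*a)).indicator f)) (hgi : Integrable ((D ∩ ball w (7*a)).indicator (dslope f z)))
    (hg2 : Integrable (fun x => ‖(D ∩ ball w (7*a)).indicator (dslope f z) x‖ ^ 2)) :
    ‖f z‖ * (2 * Real.pi ^ 2 - (8 * Real.pi / a ^ 2) * ∫ x in ball w (7*a), Ψ x) ≤
      (4 * Real.pi / a ^ 2) * (∫ x, ‖(D ∩ ball w (7*a)).indicator f x‖) +
      (2 * Real.pi * (∫ x, ‖(D ∩ ball w (7*a)).indicator (dslope f z) x‖ ^ 2) + C1) / (2 * L) := by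
  have ha : 0 < a := hr.trans hra
  have hcm : Measurable (circleMap 0 r) := (continuous_circleMap 0 r).measurable
  set θ := cut w a 2 with hθ
  have hθm : Measurable θ := (cut_cont w a 2).measurable
  have hθ0 : ∀ x, 0 ≤ θ x := cut_nonneg w a 2
  have hθ1 : ∀ x, θ x ≤ 1 := cut_le_one w a 2
  have hθs : ∀ x, x ∉ ball w (3*a) → θ x = 0 := fun x hx => cut_zero w a 2 ha x (by convert hx using 3; norm_num)
  have hθo : ∀ x, x ∈ closedBall w (2*a) → θ x = 1 := fun x hx => cut_one w a 2 ha x hx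
  set A := D ∩ ball w (7*a) with hA
  have hAm : MeasurableSet A := hD.measurableSet.inter measurableSet_ball
  set g := dslope f z with hg
  have hgd : DifferentiableOn ℂ g D := (Complex.differentiableOn_dslope (hD.mem_nhds hzD)).2 hf
  set gt := A.indicator g with hgt
  set ft := A.indicator f with hft
  -- distances
  have dist1 : ∀ (x : ℂ) φ, ‖x - circleMap 0 r φ - w‖ ≤ ‖x - w‖ + r := by
    intro x φ
    have h1 := norm_sub_le (x - w) (circleMap 0 r φ)
    rwa [norm_circ r hr.le, sub_right_comm] at h1
  have dist2 : ∀ (x : ℂ) φ, ‖x - w‖ ≤ ‖x - circleMap 0 r φ - w‖ + r := by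
    intro x φ
    have h1 := norm_sub_norm_le (x - w) (circleMap 0 r φ)
    rw [norm_circ r hr.le, sub_right_comm] at h1
    linarith
  have dist3 : ∀ (x : ℂ) φ, ‖x + circleMap 0 r φ - w‖ ≤ ‖x - w‖ + r := by
    intro x φ
    have h1 := norm_add_le (x - w) (circleMap 0 r φ)
    rwa [norm_circ r hr.le, ← add_sub_right_comm] at h1
  have nR : ∀ c : ℝ, ‖(c:ℂ)‖ = |c| := fun c => by rw [Complex.norm_real, Real.norm_eq_abs]
  -- eta
  set η : ℂ → ℝ := fun x => θ x * (1 - Ψ x) with hηdef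
  have hηm : Measurable η := by fun_prop
  have hη1 : ∀ x, |η x| ≤ 1 := fun x => by
    rw [abs_of_nonneg (mul_nonneg (hθ0 x) (by linarith [hΨ1 x]))]
    exact mul_le_one₀ (hθ1 x) (by linarith [hΨ1 x]) (by linarith [hΨ0 x])
  have iA : Integrable (fun p : ℝ × ℂ => gt p.2 * ((η (p.2 - circleMap 0 r p.1) : ℂ) * circleMap 0 r p.1)) Qm := by
    apply Qm_mulbdd gt hgi _ (by fun_prop) r
    intro p
    rw [norm_mul, norm_circ r hr.le, nR]
    calc _ ≤ 1 * r := by gcongr; exact hη1 _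
      _ = r := one_mul r
  have eA : ∫ p : ℝ × ℂ, gt p.2 * ((η (p.2 - circleMap 0 r p.1) : ℂ) * circleMap 0 r p.1) ∂Qm = 0 := by
    have i3 := shear_integrable r _ iA
    rw [← shear_integral r]
    simp only [add_sub_cancel_right] at i3 ⊢
    unfold Qm at i3 ⊢
    rw [integral_prod_symm _ i3]
    simp only
    apply integral_eq_zero_of_ae
    refine Eventually.of_forall fun y => ?_
    simp only [Pi.zero_apply]
    by_cases hy0 : η y = 0
    · simp [hy0]
    · have hy1 : θ y ≠ 0 := fun h => hy0 (by simp [hηdef, h])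
      have hy2 : Ψ y ≠ 1 := fun h => hy0 (by simp [hηdef, h])
      have hy3 : y ∈ ball w (3*a) := by
        by_contra h; exact hy1 (hθs y h)
      have hcb := hη y hy3 hy2
      have : ∀ φ, gt (y + circleMap 0 r φ) * ((η y : ℂ) * circleMap 0 r φ) = (η y : ℂ) * (g (y + circleMap 0 r φ) * circleMap 0 r φ) := by
        intro φ
        have hmem : y + circleMap 0 r φ ∈ A := by
          constructor
          · apply hcb; rw [mem_closedBall, dist_eq_norm, add_sub_cancel_left, norm_circ r hr.le]
          · rw [mem_ball, dist_eq_norm] at hy3 ⊢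
            linarith [dist3 y φ]
        rw [hgt, indicator_of_mem hmem]; ring
      simp_rw [this]
      rw [integral_const_mul, cauchyC g y r hr.le (hgd.continuousOn.mono hcb) (fun x hx => (hgd x (hcb (ball_subset_closedBall hx))).differentiableAt (hD.mem_nhds (hcb (ball_subset_closedBall hx)))), mul_zero]
  have iB : Integrable (fun p : ℝ × ℂ => gt p.2 * ((η p.2 : ℂ) * circleMap 0 r p.1)) Qm := by
    apply Qm_mulbdd gt hgi _ (by fun_prop) r
    intro p
    rw [norm_mul, norm_circ r hr.le, nR]
    calc _ ≤ 1 * r := by gcongr; exact hη1 _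
      _ = r := one_mul r
  have eB : ∫ p : ℝ × ℂ, gt p.2 * ((η p.2 : ℂ) * circleMap 0 r p.1) ∂Qm = 0 := by
    have : ∀ p : ℝ × ℂ, gt p.2 * ((η p.2 : ℂ) * circleMap 0 r p.1) = circleMap 0 r p.1 * (gt p.2 * (η p.2 : ℂ)) := fun p => by ring
    simp_rw [this]
    unfold Qm
    rw [integral_prod_mul (fun φ => circleMap 0 r φ) (fun x => gt x * (η x : ℂ)), circ_int_zero r hr.le, zero_mul]
  have hdΨ : ∀ x y, |Ψ x - Ψ y| ≤ 1 := fun x y => by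
    rw [abs_le]; constructor <;> linarith [hΨ0 x, hΨ0 y, hΨ1 x, hΨ1 y]
  have i2 : Integrable (fun p : ℝ × ℂ => gt p.2 * (((θ p.2 * (Ψ (p.2 - circleMap 0 r p.1) - Ψ p.2) : ℝ) : ℂ) * circleMap 0 r p.1)) Qm := by
    apply Qm_mulbdd gt hgi _ (by fun_prop) r
    intro p
    rw [norm_mul, norm_circ r hr.le, nR, abs_mul, abs_of_nonneg (hθ0 _)]
    calc _ ≤ (1 * 1) * r := by
          gcongr
          · exact hθ1 _
          · exact hdΨ _ _
      _ = r := by ring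
  set m : ℝ × ℂ → ℝ := fun p => (ball w (3*a)).indicator (fun _ => (1:ℝ)) p.2 * (Ψ (p.2 - circleMap 0 r p.1) - Ψ p.2) ^ 2 with hm
  have im : Integrable m Qm := by
    have hind : Measurable ((ball w (3*a)).indicator (fun _ => (1:ℝ))) := measurable_const.indicator measurableSet_ball
    refine Qm_bdd _ (by fun_prop) 1 w (3*a) ?_ ?_
    · intro p
      simp only [hm]
      rw [norm_mul, Real.norm_eq_abs, Real.norm_eq_abs, abs_pow]
      apply mul_le_one₀ _ (by positivity) (pow_le_one₀ (abs_nonneg _) (hdΨ _ _))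
      by_cases h : p.2 ∈ ball w (3*a)
      · simp [indicator_of_mem h]
      · simp [indicator_of_notMem h]
    · intro p hp
      simp only [hm]
      rw [indicator_of_notMem hp, zero_mul]
  have b2 : ‖∫ p : ℝ × ℂ, gt p.2 * (((θ p.2 * (Ψ (p.2 - circleMap 0 r p.1) - Ψ p.2) : ℝ) : ℂ) * circleMap 0 r p.1) ∂Qm‖
      ≤ r ^ 2 * ((2 * Real.pi * (∫ x, ‖gt x‖ ^ 2) + C1) / (2 * L)) := by
    refine (norm_integral_le_of_norm_le ((((Qm_snd _ hg2).const_mul (r/L)).add (im.const_mul (L/r))).const_mul (r/2)) (Eventually.of_forall fun p => ?_)).trans ?_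
    · rw [norm_mul, norm_mul, norm_circ r hr.le, nR, abs_mul, abs_of_nonneg (hθ0 _)]
      simp only [Pi.add_apply]
      set G := ‖gt p.2‖
      set δ := |Ψ (p.2 - circleMap 0 r p.1) - Ψ p.2| with hδ
      have hmp : θ p.2 * δ * (θ p.2 * δ) ≤ m p := by
        simp only [hm]
        by_cases h : p.2 ∈ ball w (3*a)
        · rw [indicator_of_mem h, one_mul, ← sq_abs, ← hδ]
          have : θ p.2 * δ ≤ δ := mul_le_of_le_one_left (abs_nonneg _) (hθ1 _)
          rw [sq]
          exact mul_le_mul this this (mul_nonneg (hθ0 _) (abs_nonneg _)) (abs_nonneg _)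
        · rw [hθs _ h, indicator_of_notMem h]; simp
      set X := θ p.2 * δ
      have h1 : 2 * (G * X) ≤ r / L * G ^ 2 + L / r * (X * X) := by
        have : r / L * G ^ 2 + L / r * (X * X) - 2 * (G * X) = (r * G - L * X) ^ 2 / (r * L) := by field_simp; ring
        have h3 : 0 ≤ (r * G - L * X) ^ 2 / (r * L) := by positivity
        linarith
      have h2 : L / r * (X * X) ≤ L / r * m p := by gcongr
      have h3 : G * X ≤ (r / L * G ^ 2 + L / r * m p) / 2 := by linarith
      calc G * (X * r) = r * (G * X) := by ring
        _ ≤ r * ((r / L * G ^ 2 + L / r * m p) / 2) := by gcongr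
        _ = _ := by ring
    · have ee := integral_add ((Qm_snd _ hg2).const_mul (r/L)) (im.const_mul (L/r))
      rw [integral_const_mul]
      simp only [Pi.add_apply]
      rw [ee, integral_const_mul, integral_const_mul, Qm_snd_int (fun x => ‖gt x‖ ^ 2)]
      have h1 : L / r * ∫ p, m p ∂Qm ≤ L / r * (C1 * r ^ 2 / L ^ 2) := by gcongr
      calc _ ≤ r / 2 * (r / L * (2 * Real.pi * ∫ x, ‖gt x‖ ^ 2) + L / r * (C1 * r ^ 2 / L ^ 2)) := by gcongr
        _ = _ := by field_simp
  -- step d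
  set b : ℝ × ℂ → ℂ := fun p => (p.2 - z)⁻¹ * (((θ (p.2 - circleMap 0 r p.1) - θ p.2 : ℝ) : ℂ) * circleMap 0 r p.1) with hb
  have hbm : Measurable b := by fun_prop
  set K := 2 * r ^ 2 / a ^ 2 with hK
  have hK0 : 0 ≤ K := by positivity
  have hb0 : ∀ p : ℝ × ℂ, p.2 ∈ ball w a → b p = 0 := by
    intro p hp
    rw [mem_ball, dist_eq_norm] at hp
    simp only [hb]
    rw [hθo p.2 (by rw [mem_closedBall, dist_eq_norm]; linarith), hθo (p.2 - circleMap 0 r p.1) (by rw [mem_closedBall, dist_eq_norm]; linarith [dist1 p.2 p.1])]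
    simp
  have hb1 : ∀ p : ℝ × ℂ, p.2 ∉ ball w (4*a) → b p = 0 := by
    intro p hp
    rw [mem_ball, dist_eq_norm, not_lt] at hp
    simp only [hb]
    rw [hθs p.2 (by rw [mem_ball, dist_eq_norm]; linarith), hθs (p.2 - circleMap 0 r p.1) (by rw [mem_ball, dist_eq_norm]; linarith [dist2 p.2 p.1])]
    simp
  have hbK : ∀ p, ‖b p‖ ≤ K := by
    intro p
    by_cases hp : p.2 ∈ ball w a
    · rw [hb0 p hp, norm_zero]; exact hK0
    · rw [mem_ball, dist_eq_norm, not_lt] at hp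
      simp only [hb]
      rw [norm_mul, norm_mul, norm_circ r hr.le, nR, norm_inv]
      have h1 : a / 2 ≤ ‖p.2 - z‖ := by
        rw [mem_ball, dist_eq_norm] at hz
        have := norm_sub_norm_le (p.2 - w) (z - w)
        rw [sub_sub_sub_cancel_right] at this
        linarith
      have h2 := cut_lip w a 2 ha (p.2 - circleMap 0 r p.1) p.2
      rw [sub_sub_cancel_left, norm_neg, norm_circ r hr.le] at h2
      calc _ ≤ (a/2)⁻¹ * (r / a * r) := by gcongr
        _ = K := by rw [hK]; field_simp
  set β : ℝ × ℂ → ℂ := fun p => b p * ((1 - Ψ (p.2 - circleMap 0 r p.1) : ℝ) : ℂ) with hβ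
  have hβm : Measurable β := by fun_prop
  have hβK : ∀ p, ‖β p‖ ≤ K := by
    intro p
    simp only [hβ]
    rw [norm_mul, nR, abs_of_nonneg (by linarith [hΨ1 (p.2 - circleMap 0 r p.1)])]
    calc _ ≤ K * 1 := by
          apply mul_le_mul (hbK p) (by linarith [hΨ0 (p.2 - circleMap 0 r p.1)]) (by linarith [hΨ1 (p.2 - circleMap 0 r p.1)]) hK0
      _ = K := mul_one K
  have hβ1 : ∀ p : ℝ × ℂ, p.2 ∉ ball w (4*a) → β p = 0 := fun p hp => by simp only [hβ]; rw [hb1 p hp, zero_mul]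
  have iff : Integrable (fun p : ℝ × ℂ => ft p.2 * β p) Qm := Qm_mulbdd ft hfi β hβm K hβK
  set α : ℝ × ℂ → ℂ := fun p => A.indicator (fun _ => (1:ℂ)) p.2 * β p with hα
  have hAim : Measurable (A.indicator (fun _ => (1:ℂ))) := measurable_const.indicator hAm
  have iα : Integrable α Qm := by
    refine Qm_bdd _ (by fun_prop) K w (4*a) ?_ ?_
    · intro p
      simp only [hα]
      by_cases h : p.2 ∈ A
      · rw [indicator_of_mem h, one_mul]; exact hβK p
      · rw [indicator_of_notMem h, zero_mul, norm_zero]; exact hK0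
    · intro p hp
      simp only [hα]; rw [hβ1 p hp, mul_zero]
  have ib : Integrable b Qm := Qm_bdd _ hbm K w (4*a) hbK hb1
  have pwd : ∀ p : ℝ × ℂ, gt p.2 * ((η (p.2 - circleMap 0 r p.1) : ℂ) * circleMap 0 r p.1) - gt p.2 * ((η p.2 : ℂ) * circleMap 0 r p.1)
      + gt p.2 * (((θ p.2 * (Ψ (p.2 - circleMap 0 r p.1) - Ψ p.2) : ℝ) : ℂ) * circleMap 0 r p.1) = ft p.2 * β p - f z * α p := by
    intro p
    simp only [hgt, hft, hα]
    by_cases h : p.2 ∈ A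
    · rw [indicator_of_mem h, indicator_of_mem h, indicator_of_mem h]
      by_cases hxz : p.2 = z
      · have hpa : p.2 ∈ ball w a := by rw [hxz]; exact ball_subset_ball (by linarith) hz
        have hbb : β p = 0 := by simp only [hβ]; rw [hb0 p hpa, zero_mul]
        rw [hbb]
        rw [mem_ball, dist_eq_norm] at hpa
        simp only [hηdef]
        rw [hθo p.2 (by rw [mem_closedBall, dist_eq_norm]; linarith), hθo (p.2 - circleMap 0 r p.1) (by rw [mem_closedBall, dist_eq_norm]; linarith [dist1 p.2 p.1])]
        push_cast; ring
      · have : g p.2 = (p.2 - z)⁻¹ * (f p.2 - f z) := by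
          rw [hg, dslope_of_ne _ hxz, slope_def_module, smul_eq_mul]
        rw [this]
        simp only [hβ, hb, hηdef]
        push_cast; ring
    · rw [indicator_of_notMem h, indicator_of_notMem h, indicator_of_notMem h]; simp
  have eD : ∫ p : ℝ × ℂ, gt p.2 * (((θ p.2 * (Ψ (p.2 - circleMap 0 r p.1) - Ψ p.2) : ℝ) : ℂ) * circleMap 0 r p.1) ∂Qm = ∫ p, ft p.2 * β p ∂Qm - f z * ∫ p, α p ∂Qm := by
    have h1 := integral_congr_ae (μ := Qm) (Eventually.of_forall pwd)
    have h2 := integral_add (iA.sub iB) i2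
    simp only [Pi.sub_apply] at h2
    have h3 := integral_sub iA iB
    have h4 := integral_sub iff (iα.const_mul (f z))
    rw [h2, h3, eA, eB, h4, integral_const_mul] at h1
    simpa using h1
  have bf : ‖∫ p, ft p.2 * β p ∂Qm‖ ≤ K * (2 * Real.pi * ∫ x, ‖ft x‖) := by
    rw [← Qm_snd_int (fun x => ‖ft x‖), ← integral_const_mul]
    refine norm_integral_le_of_norm_le ((Qm_snd _ hfi.norm).const_mul K) (Eventually.of_forall fun p => ?_)
    rw [norm_mul, mul_comm]
    gcongr
    exact hβK p
  set Ψt := (ball w (7*a)).indicator Ψ with hΨt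
  have hΨt0 : ∀ x, 0 ≤ Ψt x := fun x => indicator_nonneg (fun y _ => hΨ0 y) x
  have hΨti : Integrable Ψt := by
    rw [hΨt, integrable_indicator_iff measurableSet_ball]
    refine Measure.integrableOn_of_bounded (M := 1) measure_ball_lt_top.ne hΨm.aestronglyMeasurable (Eventually.of_forall fun x => ?_)
    rw [Real.norm_eq_abs, abs_of_nonneg (hΨ0 x)]; exact hΨ1 x
  have iΨ1 : Integrable (fun p : ℝ × ℂ => Ψt p.2) Qm := Qm_snd _ hΨti
  have eΨ2 : ∫ p : ℝ × ℂ, Ψt (p.2 - circleMap 0 r p.1) ∂Qm = ∫ p : ℝ × ℂ, Ψt p.2 ∂Qm := by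
    rw [← shear_integral r]; simp
  have iΨ2 : Integrable (fun p : ℝ × ℂ => Ψt (p.2 - circleMap 0 r p.1)) Qm := by
    rw [← (shear_mp r).integrable_comp_emb (shear r).measurableEmbedding]
    refine iΨ1.congr (Eventually.of_forall fun p => ?_)
    simp [shear]
  have bα : ‖∫ p, b p ∂Qm - ∫ p, α p ∂Qm‖ ≤ K * (2 * (2 * Real.pi * ∫ x in ball w (7*a), Ψ x)) := by
    rw [← integral_sub ib iα]
    refine (norm_integral_le_of_norm_le ((iΨ1.add iΨ2).const_mul K) (Eventually.of_forall fun p => ?_)).trans (le_of_eq ?_)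
    · simp only [Pi.add_apply]
      by_cases hp : p.2 ∈ ball w (4*a)
      · have hp7 : p.2 ∈ ball w (7*a) := ball_subset_ball (by linarith) hp
        have hp8 : p.2 - circleMap 0 r p.1 ∈ ball w (7*a) := by
          rw [mem_ball, dist_eq_norm] at hp ⊢
          linarith [dist1 p.2 p.1]
        by_cases hpD : p.2 ∈ D
        · have : b p - α p = b p * (Ψ (p.2 - circleMap 0 r p.1) : ℂ) := by
            simp only [hα]; rw [indicator_of_mem (show p.2 ∈ A from ⟨hpD, hp7⟩)]; simp only [hβ]; push_cast; ring
          rw [this, norm_mul, nR, abs_of_nonneg (hΨ0 _)]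
          have h5 : Ψt (p.2 - circleMap 0 r p.1) = Ψ (p.2 - circleMap 0 r p.1) := by rw [hΨt, indicator_of_mem hp8]
          rw [h5]
          calc _ ≤ K * Ψ (p.2 - circleMap 0 r p.1) := by gcongr; exacts [hΨ0 _, hbK p]
            _ ≤ _ := by gcongr; linarith [hΨt0 p.2]
        · have : b p - α p = b p := by
            simp only [hα]; rw [indicator_of_notMem (fun h => hpD h.1)]; ring
          rw [this]
          have h5 : Ψt p.2 = 1 := by rw [hΨt, indicator_of_mem hp7, hP p.2 hp7 hpD]
          rw [h5]
          calc _ ≤ K * 1 := by rw [mul_one]; exact hbK p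
            _ ≤ _ := by gcongr; linarith [hΨt0 (p.2 - circleMap 0 r p.1)]
      · simp only [hα]
        rw [hb1 p hp, hβ1 p hp, mul_zero, sub_zero, norm_zero]
        exact mul_nonneg hK0 (add_nonneg (hΨt0 _) (hΨt0 _))
    · rw [integral_const_mul]
      have := integral_add iΨ1 iΨ2
      simp only [Pi.add_apply]
      rw [this, eΨ2, Qm_snd_int, hΨt, integral_indicator measurableSet_ball]
      ring
  have hJ : ∫ p, b p ∂Qm = 2 * Real.pi ^ 2 * r ^ 2 := J0 w z a r hr hra hz
  have nJ : ‖∫ p, b p ∂Qm‖ = 2 * Real.pi ^ 2 * r ^ 2 := by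
    rw [hJ]
    have : (2 * Real.pi ^ 2 * r ^ 2 : ℂ) = ((2 * Real.pi ^ 2 * r ^ 2 : ℝ) : ℂ) := by push_cast; ring
    rw [this, nR, abs_of_nonneg (by positivity)]
  have l1 : 2 * Real.pi ^ 2 * r ^ 2 - K * (2 * (2 * Real.pi * ∫ x in ball w (7*a), Ψ x)) ≤ ‖∫ p, α p ∂Qm‖ := by
    have := norm_sub_norm_le (∫ p, b p ∂Qm) (∫ p, α p ∂Qm)
    linarith
  have l2 : ‖f z‖ * ‖∫ p, α p ∂Qm‖ ≤ K * (2 * Real.pi * ∫ x, ‖ft x‖) + r ^ 2 * ((2 * Real.pi * (∫ x, ‖gt x‖ ^ 2) + C1) / (2 * L)) := by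
    rw [← norm_mul]
    have : f z * ∫ p, α p ∂Qm = ∫ p, ft p.2 * β p ∂Qm - (∫ p, ft p.2 * β p ∂Qm - f z * ∫ p, α p ∂Qm) := by ring
    rw [this, ← eD]
    refine (norm_sub_le _ _).trans (add_le_add bf b2)
  have l3 := mul_le_mul_of_nonneg_left l1 (norm_nonneg (f z))
  have hr2 : 0 < r ^ 2 := by positivity
  have l4 : r ^ 2 * (‖f z‖ * (2 * Real.pi ^ 2 - (8 * Real.pi / a ^ 2) * ∫ x in ball w (7*a), Ψ x)) ≤ r ^ 2 * ((4 * Real.pi / a ^ 2) * (∫ x, ‖ft x‖) + (2 * Real.pi * (∫ x, ‖gt x‖ ^ 2) + C1) / (2 * L)) := by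
    calc _ = ‖f z‖ * (2 * Real.pi ^ 2 * r ^ 2 - K * (2 * (2 * Real.pi * ∫ x in ball w (7*a), Ψ x))) := by
          rw [hK]; ring
      _ ≤ _ := l3.trans l2
      _ = _ := by rw [hK]; ring
  exact le_of_mul_le_mul_left l4 hr2

lemma usc_open {V : Set ℂ} {u : ℂ → EReal} (hV : IsOpen V) (hu : UpperSemicontinuousOn u V) (c : EReal) :
    IsOpen {y | y ∈ V ∧ u y < c} := by
  obtain ⟨O, hO, h⟩ := upperSemicontinuousOn_iff_preimage_Iio.1 hu c
  have : {y | y ∈ V ∧ u y < c} = V ∩ O := by rw [← h]; rfl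
  rw [this]; exact hV.inter hO

lemma usc_meas {V : Set ℂ} {u : ℂ → EReal} (hV : IsOpen V) (hu : UpperSemicontinuousOn u V) (W : Set ℂ) (hW : MeasurableSet W) (hWV : W ⊆ V) (d : EReal) [DecidablePred (· ∈ W)] :
    Measurable (fun y => if y ∈ W then u y else d) := by
  apply measurable_of_Iio
  intro c
  have : (fun y => if y ∈ W then u y else d) ⁻¹' Iio c = (W ∩ {y | y ∈ V ∧ u y < c}) ∪ (Wᶜ ∩ {y | d < c}) := by
    ext y
    by_cases h : y ∈ W
    · simp [h, hWV h]
    · simp [h]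
  rw [this]
  exact (hW.inter (usc_open hV hu c).measurableSet).union (hW.compl.inter (MeasurableSet.const _))

lemma usc_bdd {V : Set ℂ} {u : ℂ → EReal} (hV : IsOpen V) (hu : UpperSemicontinuousOn u V) (ht : ∀ z ∈ V, u z < ⊤) (K : Set ℂ)
    (hK : IsCompact K) (hKV : K ⊆ V) : ∃ c : ℕ, ∀ y ∈ K, u y ≤ ((c : ℝ) : EReal) := by
  obtain ⟨c, hc⟩ := hK.elim_directed_cover (fun n : ℕ => {y | y ∈ V ∧ u y < ((n : ℝ) : EReal)}) (fun n => usc_open hV hu _) (by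
    intro y hy
    obtain ⟨x, hx, -⟩ := EReal.lt_iff_exists_real_btwn.1 (ht y (hKV hy))
    obtain ⟨n, hn⟩ := exists_nat_gt x
    exact mem_iUnion.2 ⟨n, hKV hy, hx.trans (EReal.coe_lt_coe_iff.2 hn)⟩) (by
    intro i j
    refine ⟨max i j, ?_, ?_⟩
    · rintro y ⟨h1, h2⟩
      exact ⟨h1, h2.trans_le (EReal.coe_le_coe_iff.2 (by exact_mod_cast le_max_left i j))⟩
    · rintro y ⟨h1, h2⟩
      exact ⟨h1, h2.trans_le (EReal.coe_le_coe_iff.2 (by exact_mod_cast le_max_right i j))⟩)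
  exact ⟨c, fun y hy => (hc hy).2.le⟩

noncomputable def tn (n : ℕ) (x : EReal) : ℝ := (max x (-(n : ℝ) : EReal)).toReal

lemma tn_meas (n : ℕ) : Measurable (tn n) := by unfold tn; fun_prop

lemma tn_coe (n : ℕ) (x : EReal) (hx : x < ⊤) : (tn n x : EReal) = max x (-(n : ℝ) : EReal) := by
  unfold tn
  apply EReal.coe_toReal
  · exact (max_lt hx (by exact_mod_cast EReal.coe_lt_top (-(n:ℝ)))).ne
  · exact (lt_of_lt_of_le (by exact_mod_cast EReal.bot_lt_coe (-(n:ℝ))) (le_max_right _ _)).ne'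

lemma tn_ge (n : ℕ) (x : EReal) (hx : x < ⊤) : -(n:ℝ) ≤ tn n x := by
  rw [← EReal.coe_le_coe_iff, tn_coe n x hx]
  push_cast
  exact le_max_right _ _

lemma tn_le (n : ℕ) (x : EReal) (c : ℝ) (hc : 0 ≤ c) (hx : x ≤ c) : tn n x ≤ c := by
  rw [← EReal.coe_le_coe_iff, tn_coe n x (hx.trans_lt (EReal.coe_lt_top c))]
  apply max_le hx
  have : (-(n:ℝ)) ≤ c := by have : (0:ℝ) ≤ n := by positivity
                            linarith
  exact_mod_cast this

lemma tn_bot (n : ℕ) (x : EReal) (hx : x ≤ (-(n:ℝ) : ℝ)) : tn n x = -(n:ℝ) := by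
  unfold tn
  rw [max_eq_right (by exact_mod_cast hx)]
  exact_mod_cast EReal.toReal_coe (-(n:ℝ))

lemma tn_coe_eq (n : ℕ) (x : ℝ) (hx : -(n:ℝ) ≤ x) : tn n x = x := by
  unfold tn
  rw [max_eq_left (by exact_mod_cast hx)]
  simp

lemma tn_bdd (n c : ℕ) (x : EReal) (hx : x ≤ ((c:ℝ):EReal)) : |tn n x| ≤ n + c := by
  have h1 := tn_le n x c (by positivity) hx
  have h2 := tn_ge n x (hx.trans_lt (EReal.coe_lt_top _))
  have : (0:ℝ) ≤ n := by positivity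
  have : (0:ℝ) ≤ c := by positivity
  rw [abs_le]; constructor <;> linarith

lemma circ_trunc (u : ℂ → EReal) (c : ℂ) (R : ℝ) (n : ℕ) (s : ℝ) : 
    ∫ θ in s..(s + 2 * Real.pi), tn n (u (c + circleMap 0 R θ)) = 2 * Real.pi * circleAvgTrunc u c R n := by
  have e : circleAvgTrunc u c R n = (2 * Real.pi)⁻¹ * ∫ θ in (0:ℝ)..(2 * Real.pi), tn n (u (c + circleMap 0 R θ)) := by
    simp only [circleAvgTrunc, tn, circleMap, zero_add]
  have hp : Function.Periodic (fun θ => tn n (u (c + circleMap 0 R θ))) (2 * Real.pi) := by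
    intro θ
    simp only [periodic_circleMap 0 R θ]
  rw [e, hp.intervalIntegral_add_eq s 0, zero_add, mul_inv_cancel_left₀ (by positivity)]

lemma circ_mem (c : ℂ) (R : ℝ) (hR : 0 ≤ R) (θ : ℝ) : c + circleMap 0 R θ ∈ closedBall c R := by
  simp [dist_eq_norm, circleMap, abs_of_nonneg hR]

lemma circ_meas {V : Set ℂ} {u : ℂ → EReal} (hV : IsOpen V) (hu : UpperSemicontinuousOn u V) (c : ℂ) (R : ℝ) (hR : 0 ≤ R) (hb : closedBall c R ⊆ V) :
    Measurable (fun θ : ℝ => u (c + circleMap 0 R θ)) := by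
  classical
  have := (usc_meas hV hu (closedBall c R) isClosed_closedBall.measurableSet hb ⊥).comp (g := fun y => if y ∈ closedBall c R then u y else ⊥) (f := fun θ : ℝ => c + circleMap 0 R θ)
    (by apply Continuous.measurable; exact continuous_const.add (continuous_circleMap 0 R))
  convert this using 1
  ext θ
  simp only [Function.comp, if_pos (circ_mem c R hR θ)]

lemma circ_null {V : Set ℂ} {u : ℂ → EReal} (hV : IsOpen V) (hu : SubharmonicOn u V) (x : ℂ) (R : ℝ) (hR : 0 < R)
    (hb : closedBall x R ⊆ V) (hx : u x ≠ ⊥) : 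
    volume ({θ : ℝ | u (x + circleMap 0 R θ) = ⊥} ∩ Ioc (-Real.pi) Real.pi) = 0 := by
  obtain ⟨c, hc⟩ := usc_bdd hV hu.1 hu.2.1 _ (isCompact_closedBall x R) hb
  have hm := circ_meas hV hu.1 x R hR.le hb
  set S := {θ : ℝ | u (x + circleMap 0 R θ) = ⊥} with hS
  have hSm : MeasurableSet S := hm (measurableSet_singleton ⊥)
  have hxV : x ∈ V := hb (mem_closedBall_self hR.le)
  set m := (u x).toReal with hmm
  have hux : u x = (m : EReal) := (EReal.coe_toReal (hu.2.1 x hxV).ne hx).symm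
  set μ := volume.restrict (Ioc (-Real.pi) Real.pi) with hμ
  have hμ1 : μ.real univ = 2 * Real.pi := by
    simp [hμ, Measure.real]
    rw [ENNReal.toReal_ofReal (by positivity)]; ring
  have key : ∀ n : ℕ, 2 * Real.pi * m ≤ 2 * Real.pi * c - (c + n) * μ.real S := by
    intro n
    have h1 : m ≤ circleAvgTrunc u x R n := by
      have := (hu.2.2 x hxV R hR hb).trans (iInf_le _ n)
      rw [hux] at this
      exact_mod_cast this
    have h2 := circ_trunc u x R n (-Real.pi)
    rw [show -Real.pi + 2 * Real.pi = Real.pi by ring, intervalIntegral.integral_of_le (by linarith [Real.pi_pos])] at h2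
    have h3 : ∫ θ in Ioc (-Real.pi) Real.pi, tn n (u (x + circleMap 0 R θ)) ≤ ∫ θ in Ioc (-Real.pi) Real.pi, ((c:ℝ) - S.indicator (fun _ => (c:ℝ) + n) θ) := by
      apply integral_mono
      · apply Measure.integrableOn_of_bounded (M := n + c) (by simp) ((tn_meas n).comp hm).aestronglyMeasurable
        exact Eventually.of_forall fun θ => by
          rw [Real.norm_eq_abs]; exact tn_bdd n c _ (hc _ (circ_mem x R hR.le θ))
      · exact (integrable_const _).sub ((integrable_const _).indicator hSm)
      · intro θ
        by_cases h : θ ∈ S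
        · simp only [indicator_of_mem h]
          rw [tn_bot n _ (by rw [show u (x + circleMap 0 R θ) = ⊥ from h]; exact bot_le)]; linarith
        · simp only [indicator_of_notMem h, sub_zero]
          exact tn_le n _ c (by positivity) (hc _ (circ_mem x R hR.le θ))
    rw [integral_sub (integrable_const _) ((integrable_const _).indicator hSm), integral_indicator hSm, integral_const, integral_const, ← hμ, hμ1] at h3
    simp only [smul_eq_mul, measureReal_restrict_apply_univ] at h3
    rw [h2] at h3
    have : 2 * Real.pi * m ≤ 2 * Real.pi * circleAvgTrunc u x R n := by gcongr
    linarith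
  have h0 : μ.real S = 0 := by
    by_contra hne
    have hpos : 0 < μ.real S := lt_of_le_of_ne measureReal_nonneg (Ne.symm hne)
    obtain ⟨n, hn⟩ := exists_nat_gt ((2 * Real.pi * c - 2 * Real.pi * m) / μ.real S)
    rw [div_lt_iff₀ hpos] at hn
    have := key n
    have : 0 ≤ (c:ℝ) * μ.real S := by positivity
    nlinarith
  rw [Measure.real, ENNReal.toReal_eq_zero_iff] at h0
  rcases h0 with h0 | h0
  · rwa [hμ, Measure.restrict_apply hSm] at h0
  · exact absurd h0 (measure_ne_top _ _)

lemma ball_null {V : Set ℂ} {u : ℂ → EReal} (hV : IsOpen V) (hu : SubharmonicOn u V) (x : ℂ) (R : ℝ) 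
    (hb : ball x R ⊆ V) (hx : u x ≠ ⊥) : 
    volume ({y | u y = ⊥} ∩ ball x R) = 0 := by
  classical
  set N := {y | u y = ⊥} ∩ ball x R with hN
  have hNm : MeasurableSet N := by
    have := (usc_meas hV hu.1 (ball x R) measurableSet_ball hb ⊤) (measurableSet_singleton ⊥)
    convert this using 1
    ext y
    by_cases h : y ∈ ball x R
    · simp only [hN, mem_inter_iff, mem_ofPred_eq, h, and_true, mem_preimage, if_true, mem_singleton_iff]
    · simp only [hN, mem_inter_iff, mem_ofPred_eq, h, and_false, mem_preimage, if_false, mem_singleton_iff]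
      simp
  rw [← lintegral_indicator_one hNm, ← lint_translate _ (-x), ← Complex.lintegral_comp_polarCoord_symm]
  have h1 : polarCoord.target = Ioi (0:ℝ) ×ˢ Ioo (-Real.pi) Real.pi := rfl
  have hmeas : Measurable (fun p : ℝ × ℝ => (N.indicator (1 : ℂ → ℝ≥0∞)) (Complex.polarCoord.symm p - (-x))) := by
    apply ((measurable_one.indicator hNm) : Measurable (N.indicator (1 : ℂ → ℝ≥0∞))).comp
    have : (fun p : ℝ × ℝ => Complex.polarCoord.symm p - (-x)) = fun p => (p.1 : ℂ) * (Complex.cos p.2 + Complex.sin p.2 * Complex.I) - (-x) := by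
      ext p; simp [Complex.polarCoord_symm_apply]
    rw [this]; fun_prop
  rw [h1, Measure.volume_eq_prod, ← Measure.prod_restrict, lintegral_prod _ (by
    apply Measurable.aemeasurable
    simp only [smul_eq_mul]
    exact Measurable.mul (by fun_prop) hmeas)]
  rw [setLIntegral_congr_fun (g := fun _ => 0) measurableSet_Ioi]
  · simp
  intro ρ hρ
  have hρ : 0 < ρ := hρ
  have hm2 : Measurable fun θ : ℝ => (N.indicator (1 : ℂ → ℝ≥0∞)) (Complex.polarCoord.symm (ρ, θ) - (-x)) := hmeas.comp (by fun_prop : Measurable fun θ : ℝ => (ρ, θ))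
  simp only [smul_eq_mul]
  rw [lintegral_const_mul _ hm2]
  have e : ∀ θ : ℝ, Complex.polarCoord.symm (ρ, θ) - (-x) = x + circleMap 0 ρ θ := by
    intro θ
    rw [Complex.polarCoord_symm_apply, circleMap, Complex.exp_mul_I]; simp; ring
  simp only [e]
  by_cases hρR : ρ < R
  · have hz := circ_null hV hu x ρ hρ ((closedBall_subset_ball hρR).trans hb) hx
    rw [(lintegral_eq_zero_iff (by simpa only [e] using hm2)).2, mul_zero]
    rw [EventuallyEq, ae_restrict_iff' measurableSet_Ioo]
    rw [← compl_compl ({θ : ℝ | u (x + circleMap 0 ρ θ) = ⊥} ∩ Ioc (-Real.pi) Real.pi), ← mem_ae_iff] at hz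
    filter_upwards [hz] with θ hθ h2
    simp only [Pi.zero_apply]
    apply indicator_of_notMem
    intro hmem
    exact hθ ⟨hmem.1, Ioo_subset_Ioc_self h2⟩
  · have : ∀ θ : ℝ, N.indicator (1 : ℂ → ℝ≥0∞) (x + circleMap 0 ρ θ) = 0 := by
      intro θ
      apply indicator_of_notMem
      intro hmem
      have := hmem.2
      simp [circleMap, abs_of_pos hρ] at this
      linarith
    simp [this]

lemma polar_null {V : Set ℂ} {u : ℂ → EReal} (hV : IsOpen V) (hVc : IsConnected V) (hu : SubharmonicOn u V) 
    (hx : ∃ x ∈ V, u x ≠ ⊥) : volume ({y | u y = ⊥} ∩ V) = 0 := by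
  set N := {y | u y = ⊥} with hN
  set O := {x | ∃ R > 0, ball x R ⊆ V ∧ volume (N ∩ ball x R) = 0} with hO
  set O' := {x | ∃ R > 0, ball x R ⊆ V ∧ ball x R ⊆ N} with hO'
  have hOo : IsOpen O := by
    rw [Metric.isOpen_iff]
    rintro x ⟨R, hR, h1, h2⟩
    refine ⟨R/2, by positivity, fun y hy => ⟨R/2, by positivity, ?_⟩⟩
    have : ball y (R/2) ⊆ ball x R := ball_subset_ball' (by rw [mem_ball] at hy; linarith)
    exact ⟨this.trans h1, measure_mono_null (inter_subset_inter_right _ this) h2⟩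
  have hO'o : IsOpen O' := by
    rw [Metric.isOpen_iff]
    rintro x ⟨R, hR, h1, h2⟩
    refine ⟨R/2, by positivity, fun y hy => ⟨R/2, by positivity, ?_⟩⟩
    have : ball y (R/2) ⊆ ball x R := ball_subset_ball' (by rw [mem_ball] at hy; linarith)
    exact ⟨this.trans h1, this.trans h2⟩
  have hcov : V ⊆ O ∪ O' := by
    intro x hxV
    obtain ⟨R, hR, hRV⟩ := Metric.isOpen_iff.1 hV x hxV
    by_cases h : ball x (R/2) ⊆ N
    · exact Or.inr ⟨R/2, by positivity, (ball_subset_ball (by linarith)).trans hRV, h⟩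
    · left
      rw [not_subset] at h
      obtain ⟨y, hy, hyN⟩ := h
      have h1 : ball y (R/2) ⊆ V := (ball_subset_ball' (by rw [mem_ball] at hy; linarith)).trans hRV
      have h2 := ball_null hV hu y (R/2) h1 hyN
      rw [mem_ball] at hy
      refine ⟨R/2 - dist y x, by linarith, (ball_subset_ball (by linarith [dist_nonneg (x := y) (y := x)])).trans hRV, measure_mono_null (inter_subset_inter_right _ ?_) h2⟩
      exact ball_subset_ball' (by rw [dist_comm x y]; linarith)
  have hVO : V ⊆ O := by
    rcases hVc.isPreconnected.subset_or_subset hOo hO'o (by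
      rw [disjoint_left]
      rintro x ⟨R, hR, h1, h2⟩ ⟨R', hR', h1', h2'⟩
      have : ball x (min R R') ⊆ N ∩ ball x R := fun y hy => ⟨h2' (ball_subset_ball (min_le_right _ _) hy), ball_subset_ball (min_le_left _ _) hy⟩
      exact (measure_ball_pos volume x (lt_min hR hR')).ne' (measure_mono_null this h2)) hcov with h | h
    · exact h
    · exfalso
      obtain ⟨x, hxV, hne⟩ := hx
      obtain ⟨R, hR, h1, h2⟩ := h hxV
      exact hne (h2 (mem_ball_self hR))
  apply measure_null_of_locally_null
  rintro x ⟨-, hxV⟩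
  obtain ⟨R, hR, h1, h2⟩ := hVO hxV
  exact ⟨(N ∩ V) ∩ ball x R, inter_mem_nhdsWithin _ (ball_mem_nhds x hR), measure_mono_null (t := N ∩ ball x R) (fun y hy => ⟨hy.1.1, hy.2⟩) h2⟩

open Classical in
noncomputable def uT (u : ℂ → EReal) (w : ℂ) (a : ℝ) (c : ℕ) (x : ℂ) : EReal :=
  if x ∈ closedBall w (8*a) then u x else ((c:ℝ):EReal)

noncomputable def vT (u : ℂ → EReal) (w : ℂ) (a : ℝ) (c n : ℕ) (x : ℂ) : ℝ := 1 + c - tn n (uT u w a c x)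

lemma uT_mem (u : ℂ → EReal) (w : ℂ) (a : ℝ) (c : ℕ) (x : ℂ) (hx : x ∈ closedBall w (8*a)) : uT u w a c x = u x := by
  unfold uT; rw [if_pos hx]

lemma nuC_trunc (u : ℂ → EReal) (y : ℂ) (r : ℝ) (n : ℕ) : ∫ φ, tn n (u (y + circleMap 0 r φ)) ∂nuC = 2 * Real.pi * circleAvgTrunc u y r n := by
  rw [← circ_trunc u y r n 0, zero_add, intervalIntegral.integral_of_le (by positivity)]; rfl

lemma nuC_trunc' (u : ℂ → EReal) (y : ℂ) (r : ℝ) (n : ℕ) : ∫ φ, tn n (u (y + (-circleMap 0 r φ))) ∂nuC = 2 * Real.pi * circleAvgTrunc u y r n := by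
  rw [← circ_trunc u y r n Real.pi]
  have e : ∀ φ : ℝ, -circleMap 0 r φ = circleMap 0 r (φ + Real.pi) := by
    intro φ
    simp only [circleMap, zero_add]
    push_cast
    rw [add_mul, Complex.exp_add, Complex.exp_pi_mul_I]; ring
  simp only [e]
  unfold nuC
  rw [← intervalIntegral.integral_of_le (by positivity), intervalIntegral.integral_comp_add_right (fun φ => tn n (u (y + circleMap 0 r φ))), zero_add, add_comm]

lemma C5 (D : Set ℂ) (hD : IsOpen D) (w : ℂ) (V : Set ℂ) (hV : IsOpen V) (hVc : IsConnected V) (u : ℂ → EReal)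
    (hu : SubharmonicOn u V) (hne : ∃ x ∈ V, u x ≠ ⊥) (a : ℝ) (ha : 0 < a) (hball : closedBall w (8*a) ⊆ V)
    (hbot : ∀ x ∈ closedBall w (8*a), x ∉ D → u x = ⊥) :
    ∃ (Ψ : ℕ → ℂ → ℝ) (L r : ℕ → ℝ) (C1 : ℝ), (∀ n, 0 < r n ∧ r n < a ∧ Measurable (Ψ n) ∧ (∀ x, 0 ≤ Ψ n x) ∧ (∀ x, Ψ n x ≤ 1) ∧
      (∀ x ∈ ball w (7*a), x ∉ D → Ψ n x = 1) ∧ (∀ y ∈ ball w (3*a), Ψ n y ≠ 1 → closedBall y (r n) ⊆ D) ∧ 0 < L n ∧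
      ∫ p : ℝ × ℂ, (ball w (3*a)).indicator (fun _ => (1:ℝ)) p.2 * (Ψ n (p.2 - circleMap 0 (r n) p.1) - Ψ n p.2) ^ 2 ∂Qm ≤ C1 * (r n) ^ 2 / (L n) ^ 2) ∧
      Tendsto L atTop atTop ∧ Tendsto (fun n => ∫ x in ball w (7*a), Ψ n x) atTop (𝓝 0) := by
  obtain ⟨c, hc⟩ := usc_bdd hV hu.1 hu.2.1 _ (isCompact_closedBall w (8*a)) hball
  have hsub : ∀ b : ℝ, b ≤ 8 → closedBall w (b*a) ⊆ closedBall w (8*a) := fun b hb => closedBall_subset_closedBall (by nlinarith)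
  have hc0 : (0:ℝ) ≤ c := by positivity
  have huT : ∀ x, uT u w a c x ≤ ((c:ℝ):EReal) := by
    intro x; unfold uT; split_ifs with h
    · exact hc x h
    · exact le_rfl
  have huTm : Measurable (uT u w a c) := by
    classical
    have := usc_meas hV hu.1 (closedBall w (8*a)) isClosed_closedBall.measurableSet hball ((c:ℝ):EReal)
    convert this using 2
    unfold uT; congr
  have hvm : ∀ n, Measurable (vT u w a c n) := fun n => measurable_const.sub ((tn_meas n).comp huTm)
  have hv1 : ∀ n x, 1 ≤ vT u w a c n x := fun n x => by
    have := tn_le n _ c hc0 (huT x); unfold vT; linarith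
  have hvM : ∀ n x, vT u w a c n x ≤ 1 + c + n := fun n x => by
    have := tn_ge n _ ((huT x).trans_lt (EReal.coe_lt_top _)); unfold vT; linarith
  have hvbot : ∀ (n : ℕ) (x : ℂ), x ∈ closedBall w (8*a) → u x ≤ (-(n:ℝ) : ℝ) → vT u w a c n x = 1 + c + n := by
    intro n x hx h
    unfold vT; rw [uT_mem u w a c x hx, tn_bot n _ h]; ring
  set L : ℕ → ℝ := fun n => Real.log (1 + c + (n+1 : ℕ)) with hL
  have hLpos : ∀ n, 0 < L n := fun n => Real.log_pos (by
    have : (0:ℝ) ≤ n := by positivity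
    push_cast; linarith)
  set Ψ : ℕ → ℂ → ℝ := fun n x => Real.log (vT u w a c (n+1) x) / L n with hΨ
  have hΨ0 : ∀ n x, 0 ≤ Ψ n x := fun n x => div_nonneg (Real.log_nonneg (hv1 _ _)) (hLpos n).le
  have hΨ1 : ∀ n x, Ψ n x ≤ 1 := fun n x => by
    simp only [hΨ]
    rw [div_le_one (hLpos n)]
    exact Real.log_le_log (by linarith [hv1 (n+1) x]) (hvM _ _)
  have hΨm : ∀ n, Measurable (Ψ n) := fun n => (Real.measurable_log.comp (hvm _)).div_const _
  have hΨbot : ∀ (n : ℕ) (x : ℂ), x ∈ closedBall w (8*a) → u x ≤ (-((n+1:ℕ):ℝ) : ℝ) → Ψ n x = 1 := by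
    intro n x hx h
    simp only [hΨ]; rw [hvbot _ x hx h]; exact div_self (hLpos n).ne'
  have hLt : Tendsto L atTop atTop := by
    apply Real.tendsto_log_atTop.comp
    apply tendsto_atTop_add_const_left
    exact tendsto_natCast_atTop_atTop.comp (tendsto_add_atTop_nat 1)
  -- radii
  have hr : ∀ n : ℕ, ∃ r : ℝ, 0 < r ∧ r < a ∧ ∀ y ∈ ball w (3*a), Ψ n y ≠ 1 → closedBall y r ⊆ D := by
    intro n
    set K := closedBall w (3*a) \ {y | y ∈ V ∧ u y < ((-((n+1:ℕ):ℝ) : ℝ) : EReal)} with hK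
    have hKc : IsCompact K := (isCompact_closedBall w (3*a)).diff (usc_open hV hu.1 _)
    have hKD : K ⊆ D := by
      rintro y ⟨hy1, hy2⟩
      by_contra hyD
      have hy8 := hsub 3 (by norm_num) hy1
      apply hy2
      refine ⟨hball hy8, ?_⟩
      rw [hbot y hy8 hyD]
      exact EReal.bot_lt_coe _
    obtain ⟨δ, hδ, hδD⟩ := hKc.exists_cthickening_subset_open hD hKD
    refine ⟨min δ (a/2), lt_min hδ (by positivity), (min_le_right _ _).trans_lt (by linarith), ?_⟩
    intro y hy hne
    have hyK : y ∈ K := by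
      refine ⟨ball_subset_closedBall hy, ?_⟩
      rintro ⟨-, h2⟩
      exact hne (hΨbot n y (hsub 3 (by norm_num) (ball_subset_closedBall hy)) h2.le)
    exact ((closedBall_subset_closedBall (min_le_left _ _)).trans (closedBall_subset_cthickening hyK δ)).trans hδD
  choose r hr0 hra hrη using hr
  -- super mean
  have hsm : ∀ n : ℕ, ∀ y ∈ closedBall w (5*a), ∀ ρ, 0 < ρ → ρ < a → tn n (u y) ≤ circleAvgTrunc (uT u w a c) y ρ n := by
    intro n y hy ρ hρ hρa
    have hy' : closedBall y ρ ⊆ closedBall w (8*a) := by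
      apply closedBall_subset_closedBall'
      rw [mem_closedBall] at hy; linarith
    have e : circleAvgTrunc (uT u w a c) y ρ n = circleAvgTrunc u y ρ n := by
      have h1 := circ_trunc (uT u w a c) y ρ n 0
      have h2 := circ_trunc u y ρ n 0
      simp only [uT_mem u w a c _ (hy' (circ_mem y ρ hρ.le _))] at h1
      rw [h1] at h2
      exact mul_left_cancel₀ (by positivity) h2
    have h1 := (hu.2.2 y (hball (hy' (mem_closedBall_self hρ.le))) ρ hρ (hy'.trans hball)).trans (iInf_le _ n)
    rw [← EReal.coe_le_coe_iff, tn_coe n _ (hu.2.1 y (hball (hy' (mem_closedBall_self hρ.le))))]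
    rw [e]
    apply max_le h1
    have : -(n:ℝ) ≤ circleAvgTrunc u y ρ n := by
      have h3 : ∫ φ, (-(n:ℝ)) ∂nuC ≤ ∫ φ, tn n (uT u w a c (y + circleMap 0 ρ φ)) ∂nuC := by
        apply integral_mono (integrable_const _)
        · apply Integrable.of_bound (C := n + c) 
          · exact ((tn_meas n).comp (huTm.comp (by
              apply Continuous.measurable; exact continuous_const.add (continuous_circleMap 0 ρ)))).aestronglyMeasurable
          · exact Eventually.of_forall fun θ => by
              rw [Real.norm_eq_abs]; exact tn_bdd n c _ (huT _)
        · intro φ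
          exact tn_ge n _ ((huT _).trans_lt (EReal.coe_lt_top _))
      rw [nuC_trunc, integral_const, nuC_real, e, smul_eq_mul] at h3
      exact le_of_mul_le_mul_left h3 (by positivity)
    exact_mod_cast this
  have hint : ∀ (n : ℕ) (y : ℂ) (s : ℝ → ℂ), Continuous s → Integrable (fun φ => tn n (uT u w a c (y + s φ))) nuC := by
    intro n y s hs
    apply Integrable.of_bound (C := n + c) 
    · exact ((tn_meas n).comp (huTm.comp (by
        apply Continuous.measurable; exact continuous_const.add hs))).aestronglyMeasurable
    · exact Eventually.of_forall fun θ => by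
        rw [Real.norm_eq_abs]; exact tn_bdd n c _ (huT _)
  have hE : ∀ n, ∫ p : ℝ × ℂ, (ball w (3*a)).indicator (fun _ => (1:ℝ)) p.2 * (Ψ n (p.2 - circleMap 0 (r n) p.1) - Ψ n p.2) ^ 2 ∂Qm ≤ (8 * Real.pi * volume.real (ball w (7*a)) / a^2) * (r n) ^ 2 / (L n) ^ 2 := by
    intro n
    have h := cacc (vT u w a c (n+1)) (cut w a 4) w a (r n) (1 + c + (n+1:ℕ)) (hr0 n) (hra n) (hvm _) (hv1 _) (hvM _)
      (cut_cont w a 4).measurable (cut_nonneg w a 4) (cut_le_one w a 4) (fun x hx => cut_zero w a 4 ha x (fun h => hx (by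
        have := ball_subset_closedBall h; norm_num at this ⊢; exact this)))
      (fun x hx => cut_one w a 4 ha x (ball_subset_closedBall hx)) (cut_lip w a 4 ha) (by
        intro y hy
        have := hsm (n+1) y hy (r n) (hr0 n) (hra n)
        simp only [vT]
        rw [integral_sub (integrable_const _) (hint _ _ _ (continuous_circleMap 0 _)), nuC_trunc, integral_const, nuC_real, smul_eq_mul, uT_mem u w a c y (hsub 5 (by norm_num) hy), mul_sub]
        gcongr) (by
        intro y hy
        have := hsm (n+1) y hy (r n) (hr0 n) (hra n)
        simp only [vT]
        rw [integral_sub (integrable_const _) (hint (n+1) y (fun φ => -circleMap 0 (r n) φ) (continuous_circleMap 0 _).neg), nuC_trunc', integral_const, nuC_real, smul_eq_mul, uT_mem u w a c y (hsub 5 (by norm_num) hy), mul_sub]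
        gcongr)
    have e : ∀ p : ℝ × ℂ, (ball w (3*a)).indicator (fun _ => (1:ℝ)) p.2 * (Ψ n (p.2 - circleMap 0 (r n) p.1) - Ψ n p.2) ^ 2 = 
      ((ball w (3*a)).indicator (fun _ => (1:ℝ)) p.2 * (Real.log (vT u w a c (n+1) (p.2 - circleMap 0 (r n) p.1)) - Real.log (vT u w a c (n+1) p.2))^2) / (L n)^2 := by
      intro p
      simp only [hΨ]; rw [← sub_div, div_pow]; ring
    simp only [e]
    rw [integral_div]
    apply div_le_div_of_nonneg_right _ (by positivity)
    refine h.trans (le_of_eq ?_)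
    field_simp; ring
  refine ⟨Ψ, L, r, _, fun n => ⟨hr0 n, hra n, hΨm n, hΨ0 n, hΨ1 n, ?_, hrη n, hLpos n, hE n⟩, hLt, ?_⟩
  · intro x hx hxD
    have hx8 := hsub 7 (by norm_num) (ball_subset_closedBall hx)
    exact hΨbot n x hx8 (by rw [hbot x hx8 hxD]; exact bot_le)
  · have hz : (0:ℝ) = ∫ x in ball w (7*a), (0:ℝ) := by simp
    rw [hz]
    apply tendsto_integral_of_dominated_convergence (fun _ => (1:ℝ))
    · exact fun n => (hΨm n).aestronglyMeasurable
    · rw [integrable_const_iff]; right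
      exact ⟨by rw [Measure.restrict_apply_univ]; exact measure_ball_lt_top⟩
    · exact fun n => Eventually.of_forall fun x => by rw [Real.norm_eq_abs, abs_of_nonneg (hΨ0 n x)]; exact hΨ1 n x
    · rw [ae_restrict_iff' measurableSet_ball]
      have hN := polar_null hV hVc hu hne
      rw [← compl_compl ({y | u y = ⊥} ∩ V), ← mem_ae_iff] at hN
      filter_upwards [hN] with x hx hxb
      have hx8 := hsub 7 (by norm_num) (ball_subset_closedBall hxb)
      have hxV := hball hx8
      have hxne : u x ≠ ⊥ := fun h => hx ⟨h, hxV⟩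
      set m := (u x).toReal with hm
      have hux : u x = (m : EReal) := (EReal.coe_toReal (hu.2.1 x hxV).ne hxne).symm
      obtain ⟨N, hN⟩ := exists_nat_gt (-m)
      have : Tendsto (fun n => Real.log (1 + c - m) / L n) atTop (𝓝 0) := tendsto_const_nhds.div_atTop hLt
      refine this.congr' ?_
      filter_upwards [eventually_ge_atTop N] with n hn
      simp only [hΨ, vT]
      rw [uT_mem u w a c x hx8, hux, tn_coe_eq]
      have : (N:ℝ) ≤ n := by exact_mod_cast hn
      push_cast; linarith

lemma L2_ind {D : Set ℂ} (hD : IsOpen D) {f : ℂ → ℂ} (hf : f ∈ L2h D) (w : ℂ) (ρ : ℝ) :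
    Integrable ((D ∩ ball w ρ).indicator f) ∧ Integrable (fun x => ‖(D ∩ ball w ρ).indicator f x‖ ^ 2) ∧
    ENNReal.ofReal (∫ x, ‖(D ∩ ball w ρ).indicator f x‖ ^ 2) ≤ ∫⁻ z in D, (‖f z‖₊ : ℝ≥0∞) ^ 2 := by
  set B := D ∩ ball w ρ with hB
  have hBm : MeasurableSet B := hD.measurableSet.inter measurableSet_ball
  have : IsFiniteMeasure (volume.restrict B) := ⟨by
    rw [Measure.restrict_apply_univ]
    exact (measure_mono inter_subset_right).trans_lt measure_ball_lt_top⟩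
  have hsm : AEStronglyMeasurable f (volume.restrict B) :=
    (hf.1.continuousOn.mono inter_subset_left).aestronglyMeasurable hBm
  have hle : ∫⁻ z in B, (‖f z‖₊ : ℝ≥0∞) ^ 2 ≤ ∫⁻ z in D, (‖f z‖₊ : ℝ≥0∞) ^ 2 := lintegral_mono_set inter_subset_left
  have e : ∀ z, ‖‖f z‖ ^ 2‖ₑ = (‖f z‖₊ : ℝ≥0∞) ^ 2 := by
    intro z
    rw [enorm_pow, enorm_norm]; rfl
  have hsq : Integrable (fun x => ‖f x‖ ^ 2) (volume.restrict B) := by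
    refine ⟨hsm.norm.pow 2, ?_⟩
    rw [HasFiniteIntegral]
    simp only [e]
    exact hle.trans_lt hf.2
  have hmem : MemLp f 2 (volume.restrict B) := (memLp_two_iff_integrable_sq_norm hsm).2 hsq
  have e2 : (fun x => ‖B.indicator f x‖ ^ 2) = B.indicator (fun x => ‖f x‖ ^ 2) := by
    ext x
    by_cases h : x ∈ B
    · simp [indicator_of_mem h]
    · simp [indicator_of_notMem h]
  refine ⟨(integrable_indicator_iff hBm).2 (hmem.integrable (by norm_num)), ?_, ?_⟩
  · rw [e2]; exact (integrable_indicator_iff hBm).2 hsq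
  · rw [e2, integral_indicator hBm, ofReal_integral_eq_lintegral_ofReal hsq (Eventually.of_forall fun x => by positivity)]
    refine le_trans (le_of_eq ?_) hle
    apply lintegral_congr
    intro x
    rw [← e, Real.enorm_eq_ofReal (by positivity)]

lemma CS_ball (F : ℂ → ℂ) (w : ℂ) (ρ : ℝ) (hρ : 0 < ρ) (hF : ∀ x ∉ ball w ρ, F x = 0) (h1 : Integrable F) (h2 : Integrable (fun x => ‖F x‖ ^ 2)) :
    (∫ x, ‖F x‖) ^ 2 ≤ volume.real (ball w ρ) * ∫ x, ‖F x‖ ^ 2 := by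
  set v := volume.real (ball w ρ) with hv
  have hv0 : 0 < v := by
    rw [hv, Measure.real]
    exact ENNReal.toReal_pos (measure_ball_pos volume w hρ).ne' measure_ball_lt_top.ne
  set I := ∫ x, ‖F x‖ with hI
  set Q := ∫ x, ‖F x‖ ^ 2 with hQ
  set m := I / v with hm
  have hone : Integrable ((ball w ρ).indicator (fun _ => m^2)) := by
    rw [integrable_indicator_iff measurableSet_ball]
    exact integrableOn_const measure_ball_lt_top.ne
  have h0 : 0 ≤ ∫ x, (‖F x‖ ^ 2 - 2 * m * ‖F x‖ + (ball w ρ).indicator (fun _ => m^2) x) := by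
    apply integral_nonneg
    intro x
    by_cases h : x ∈ ball w ρ
    · simp only [indicator_of_mem h, Pi.zero_apply]
      nlinarith [sq_nonneg (‖F x‖ - m)]
    · simp [indicator_of_notMem h, hF x h]
  have hs : Integrable (fun x => ‖F x‖ ^ 2 - 2 * m * ‖F x‖) := h2.sub (h1.norm.const_mul _)
  rw [integral_add hs hone, integral_sub h2 (h1.norm.const_mul _), integral_const_mul, integral_indicator measurableSet_ball, setIntegral_const, smul_eq_mul, ← hv, ← hI, ← hQ] at h0
  have : I = m * v := by rw [hm]; field_simp
  rw [this] at h0 ⊢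
  nlinarith

lemma backward (D : Set ℂ) (hopen : IsOpen D) (hbd : Bornology.IsBounded D)
    (w : ℂ) (hw : w ∈ frontier D) (hU : ∃ U : Set ℂ, IsOpen U ∧ w ∈ U ∧ PolarSet (U \ D)) :
    Filter.limsup (fun z => bergmanKernel D z) (𝓝[D] w) < (⊤ : ℝ≥0∞) := by
  obtain ⟨U, hUo, hwU, hP⟩ := hU
  have hwD : w ∉ D := by
    rw [hopen.frontier_eq] at hw; exact hw.2
  obtain ⟨V, hVo, hVc, hwV, u, hu, hne, hbot⟩ := hP w ⟨hwU, hwD⟩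
  obtain ⟨b, hb, hbs⟩ := Metric.nhds_basis_closedBall.mem_iff.1 ((hUo.inter hVo).mem_nhds ⟨hwU, hwV⟩)
  set a := b / 8 with ha'
  have ha : 0 < a := by positivity
  have h8 : 8 * a = b := by rw [ha']; ring
  obtain ⟨Ψ, L, r, C1, hall, hL, hΨ⟩ := C5 D hopen w V hVo hVc u hu hne a ha (by rw [h8]; exact fun x hx => (hbs hx).2)
    (by rw [h8]; exact fun x hx hxD => hbot x ⟨⟨(hbs hx).1, hxD⟩, (hbs hx).2⟩)
  set v := volume.real (ball w (7*a)) with hv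
  set K : ℝ := (2 / (Real.pi * a ^ 2)) ^ 2 * v with hK
  have hK0 : 0 ≤ K := by positivity
  have main : ∀ f ∈ L2h D, ∀ z ∈ D ∩ ball w (a/2), (‖f z‖₊ : ℝ≥0∞) ^ 2 ≤ ENNReal.ofReal K * ∫⁻ x in D, (‖f x‖₊ : ℝ≥0∞) ^ 2 := by
    rintro f hf z ⟨hzD, hz⟩
    obtain ⟨i1, i2, i3⟩ := L2_ind hopen hf w (7*a)
    obtain ⟨j1, j2, -⟩ := L2_ind hopen (A1 hopen hbd hf hzD) w (7*a)
    set I := ∫ x, ‖(D ∩ ball w (7*a)).indicator f x‖ with hI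
    set G := ∫ x, ‖(D ∩ ball w (7*a)).indicator (dslope f z) x‖ ^ 2 with hG
    have key : ∀ n, ‖f z‖ * (2 * Real.pi ^ 2 - (8 * Real.pi / a ^ 2) * ∫ x in ball w (7*a), Ψ n x) ≤
      (4 * Real.pi / a ^ 2) * I + (2 * Real.pi * G + C1) / (2 * L n) := by
      intro n
      obtain ⟨k1, k2, k3, k4, k5, k6, k7, k8, k9⟩ := hall n
      exact C4 D hopen w z a (r n) (L n) C1 k1 k2 hz hzD f hf.1 (Ψ n) k3 k4 k5 k6 k7 k8 k9 i1 j1 j2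
    have l1 : Tendsto (fun n => ‖f z‖ * (2 * Real.pi ^ 2 - (8 * Real.pi / a ^ 2) * ∫ x in ball w (7*a), Ψ n x)) atTop (𝓝 (‖f z‖ * (2 * Real.pi ^ 2 - (8 * Real.pi / a ^ 2) * 0))) :=
      (tendsto_const_nhds.sub (hΨ.const_mul _)).const_mul _
    have l2 : Tendsto (fun n => (4 * Real.pi / a ^ 2) * I + (2 * Real.pi * G + C1) / (2 * L n)) atTop (𝓝 ((4 * Real.pi / a ^ 2) * I + 0)) :=
      tendsto_const_nhds.add (tendsto_const_nhds.div_atTop (hL.const_mul_atTop (by norm_num)))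
    have l3 := le_of_tendsto_of_tendsto' l1 l2 key
    rw [mul_zero, sub_zero, add_zero] at l3
    have hfz : ‖f z‖ ≤ 2 / (Real.pi * a ^ 2) * I := by
      have e : (4 * Real.pi / a ^ 2) * I = (2 / (Real.pi * a ^ 2) * I) * (2 * Real.pi ^ 2) := by
        field_simp; ring
      rw [e] at l3
      exact le_of_mul_le_mul_right l3 (by positivity)
    have hcs := CS_ball _ w (7*a) (by positivity) (fun x hx => indicator_of_notMem (fun h => hx h.2) f) i1 i2
    have hfz2 : ‖f z‖ ^ 2 ≤ K * ∫ x, ‖(D ∩ ball w (7*a)).indicator f x‖ ^ 2 := by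
      calc ‖f z‖ ^ 2 ≤ (2 / (Real.pi * a ^ 2) * I) ^ 2 := by gcongr
        _ = (2 / (Real.pi * a ^ 2)) ^ 2 * I ^ 2 := by ring
        _ ≤ (2 / (Real.pi * a ^ 2)) ^ 2 * (v * ∫ x, ‖(D ∩ ball w (7*a)).indicator f x‖ ^ 2) := by gcongr
        _ = _ := by rw [hK]; ring
    have e : (‖f z‖₊ : ℝ≥0∞) ^ 2 = ENNReal.ofReal (‖f z‖ ^ 2) := by
      rw [ENNReal.ofReal_pow (norm_nonneg _), ofReal_norm]; rfl
    rw [e]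
    refine (ENNReal.ofReal_le_ofReal hfz2).trans ?_
    rw [ENNReal.ofReal_mul hK0]
    gcongr
  refine lt_of_le_of_lt (Filter.limsup_le_of_le (a := ENNReal.ofReal K) (by isBoundedDefault) ?_) ENNReal.ofReal_lt_top
  filter_upwards [inter_mem_nhdsWithin D (ball_mem_nhds w (show 0 < a/2 by positivity))] with z hz
  unfold bergmanKernel
  refine iSup_le fun f => iSup_le fun hf => iSup_le fun _ => ?_
  exact ENNReal.div_le_of_le_mul (main f hf z hz)

/-- **Lemma 8.** For a bounded domain `D ⊆ ℂ` and `w ∈ ∂D`, the Bergman kernel stays bounded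
near `w` iff some open neighborhood `U` of `w` satisfies that `U \ D` is polar. -/
theorem bergman_limsup_lt_top_iff_polar (D : Set ℂ)
    (hopen : IsOpen D) (hconn : IsConnected D) (hbd : Bornology.IsBounded D)
    (w : ℂ) (hw : w ∈ frontier D) :
    Filter.limsup (fun z => bergmanKernel D z) (𝓝[D] w) < (⊤ : ℝ≥0∞) ↔
      ∃ U : Set ℂ, IsOpen U ∧ w ∈ U ∧ PolarSet (U \ D) := by
  exact ⟨forward D hopen hconn hbd w hw, backward D hopen hbd w hw⟩
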